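/- arXiv:2409.04661 — 2 statements merged into one kernel-verified Lean document; each statement's English description precedes it below -/
import Mathlib

section
/- Let p be an odd prime, let d ≥ 1 be an integer, and let r be a unit modulo p². Then the hyper Kloosterman sum Kl_d(r; p²) is nonzero if and only if r^{(p-1)/gcd(d, p-1)} ≡ 1 (mod p). -/
open scoped BigOperators

/-- `e(x) = exp(2πix)`. -/
noncomputable def e (x : ℂ) : ℂ := Complex.exp (2 * Real.pi * Complex.I * x)

/-- The hyper Kloosterman sum of dimension `d` and modulus `M` at a unit `r` mod `M`:
`Kl_d(r; M) = Σ_{n₁⋯n_d ≡ r (M)} e((n₁+⋯+n_d)/M)`. -/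
noncomputable def Kl (d M : ℕ) (r : (ZMod M)ˣ) : ℂ :=
  ∑ᶠ n : Fin d → (ZMod M)ˣ,
    if (∏ i, n i) = r then e (((∑ i, ((n i : ZMod M)).val : ℕ) : ℂ) / M) else 0

/-!
Sort the vectors `n` modulo `m ^ 2` with `∏ i, n i = r` by their reduction modulo `m`. If two
coordinates `n i`, `n j` differ modulo `m`, multiplying them by `1 + m` and `1 - m` permutes the
class and multiplies its sum by `e (m * (n i - n j) / m ^ 2) ≠ 1`, so the class contributes nothing.
If all coordinates reduce to `α`, then `∑ i, n i` is constant on the class, because products of two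
multiples of `m` vanish. Hence the Kloosterman sum is a power of `m` times the sum of one root of
unity for each solution of `α ^ d = r` modulo `m`. For `m = p` prime there are fewer than `p`
solutions, while a vanishing sum of roots of unity of `p`-power order has a number of terms
divisible by `p`: evaluate `Φ_{p ^ k} ∣ ∑ X ^ t` at `1`.
-/

open Finset

section RootsOfUnity

lemma prime_dvd_card_of_sum_pow_eq_zero {K ι : Type*} [Field K] [CharZero K] {p k : ℕ}
    [Fact p.Prime] {ζ : K} (hζ : IsPrimitiveRoot ζ (p ^ (k + 1))) {A : Finset ι} {t : ι → ℕ}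
    (h : ∑ a ∈ A, ζ ^ t a = 0) : p ∣ #A := by
  have hpos : 0 < p ^ (k + 1) := NeZero.pos _
  let P : Polynomial ℤ := ∑ a ∈ A, Polynomial.X ^ t a
  have hP : Polynomial.aeval ζ P = 0 := by simpa [P] using h
  have hdvd : Polynomial.cyclotomic (p ^ (k + 1)) ℤ ∣ P := by
    rw [Polynomial.cyclotomic_eq_minpoly hζ hpos]
    exact minpoly.isIntegrallyClosed_dvd (hζ.isIntegral hpos) hP
  have hdvd_eval : (p : ℤ) ∣ P.eval 1 := by
    simpa only [Polynomial.eval_one_cyclotomic_prime_pow] using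
      Polynomial.eval_dvd (x := (1 : ℤ)) hdvd
  have hP_eval : P.eval 1 = (#A : ℤ) := by simp [P, Polynomial.eval_finsetSum]
  exact Int.natCast_dvd_natCast.mp (hP_eval ▸ hdvd_eval)

lemma stdAddChar_eq_exp_pow_val {N : ℕ} [NeZero N] (x : ZMod N) :
    ZMod.stdAddChar x = Complex.exp (2 * Real.pi * Complex.I / N) ^ x.val := by
  rw [ZMod.stdAddChar_apply, ZMod.toCircle_apply, ← Complex.exp_nat_mul]
  congr 1
  ring

lemma prime_dvd_card_of_sum_stdAddChar_eq_zero {ι : Type*} {p k : ℕ} [Fact p.Prime]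
    {A : Finset ι} {t : ι → ZMod (p ^ (k + 1))}
    (h : ∑ a ∈ A, ZMod.stdAddChar (t a) = (0 : ℂ)) : p ∣ #A := by
  simp only [stdAddChar_eq_exp_pow_val] at h
  exact prime_dvd_card_of_sum_pow_eq_zero (Complex.isPrimitiveRoot_exp _ (NeZero.ne _)) h

end RootsOfUnity

section Groups

lemma exists_pow_eq_iff_pow_card_div_gcd_eq_one {G : Type*} [CommGroup G] [IsCyclic G] [Finite G]
    (d : ℕ) (s : G) : (∃ a, a ^ d = s) ↔ s ^ (Nat.card G / d.gcd (Nat.card G)) = 1 := by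
  set N := Nat.card G
  set m := N / d.gcd N
  have hm_dvd : m ∣ N := Nat.div_dvd_of_dvd (Nat.gcd_dvd_right _ _)
  have h_dvd : N ∣ d * m := by
    rw [← Nat.mul_div_assoc _ (Nat.gcd_dvd_right _ _),
      Nat.mul_div_right_comm (Nat.gcd_dvd_left _ _)]
    exact dvd_mul_left _ _
  have h_le : (powMonoidHom d : G →* G).range ≤ (powMonoidHom m).ker := by
    rintro _ ⟨a, rfl⟩
    rw [MonoidHom.mem_ker, powMonoidHom_apply, powMonoidHom_apply, ← pow_mul]
    exact orderOf_dvd_iff_pow_eq_one.mp ((orderOf_dvd_natCard a).trans h_dvd)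
  have h_eq : (powMonoidHom d : G →* G).range = (powMonoidHom m).ker :=
    Subgroup.eq_of_le_of_card_ge h_le <| by
      rw [IsCyclic.card_powMonoidHom_range, IsCyclic.card_powMonoidHom_ker,
        Nat.gcd_eq_right hm_dvd, Nat.gcd_comm]
  simpa using SetLike.ext_iff.mp h_eq s

lemma card_filter_eq_card_ker {G H : Type*} [Group G] [Group H] [Fintype G] [DecidableEq H]
    {f : G →* H} (hf : Function.Surjective f) (h : H) : #{g | f g = h} = Nat.card f.ker := by
  rw [← Nat.card_congr (MonoidHom.fiberEquivKerOfSurjective hf h), Nat.card_coe_set_eq,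
    ← Set.ncard_coe_finset]
  simp [Set.preimage]

variable {G H ι : Type*} [CommGroup G] [CommGroup H] [Fintype G] [DecidableEq G] [DecidableEq H]
  [Fintype ι] [DecidableEq ι]

/-- The vectors with product `r` which `f` maps coordinatewise to `a`. The Kloosterman sum modulo
`m ^ 2` is split along these sets, with `f` the reduction of units modulo `m`. -/
def prodFiber (f : G →* H) (r : G) (a : ι → H) : Finset (ι → G) :=
  {n | ∏ i, n i = r ∧ ∀ i, f (n i) = a i}

lemma mem_prodFiber {f : G →* H} {r : G} {a : ι → H} {n : ι → G} :
    n ∈ prodFiber f r a ↔ ∏ i, n i = r ∧ ∀ i, f (n i) = a i := by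
  simp [prodFiber]

lemma prodFiber_eq_empty {f : G →* H} {r : G} {a : ι → H} (h : ∏ i, a i ≠ f r) :
    prodFiber f r a = ∅ := by
  refine eq_empty_of_forall_notMem fun n hn => h ?_
  obtain ⟨rfl, hna⟩ := mem_prodFiber.mp hn
  simp only [map_prod, hna]

lemma mul_mem_prodFiber_iff {f : G →* H} {r : G} {a : ι → H} {k n : ι → G}
    (hk : k ∈ prodFiber f 1 1) : k * n ∈ prodFiber f r a ↔ n ∈ prodFiber f r a := by
  obtain ⟨hk_prod, hk_map⟩ := mem_prodFiber.mp hk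
  simp [mem_prodFiber, prod_mul_distrib, hk_prod, hk_map]

lemma mulSingle_div_mulSingle_mem_prodFiber {f : G →* H} {u : G} (hu : f u = 1) (i j : ι) :
    Pi.mulSingle i u / Pi.mulSingle j u ∈ prodFiber f 1 1 := by
  have h_single (i l : ι) : f ((Pi.mulSingle i u : ι → G) l) = 1 := by
    rw [Pi.mulSingle_apply, apply_ite f, hu, map_one, ite_self]
  simp [mem_prodFiber, h_single]

lemma card_prodFiber {d : ℕ} {f : G →* H} (hf : Function.Surjective f) {r : G}
    {a : Fin (d + 1) → H} (h : ∏ i, a i = f r) :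
    #(prodFiber f r a) = Nat.card f.ker ^ d := by
  have h_tail : #(prodFiber f r a) =
      #(Fintype.piFinset fun i : Fin d => ({g | f g = a i.succ} : Finset G)) := by
    refine card_nbij' Fin.tail (fun n => Fin.cons (r / ∏ i, n i) n) ?_ ?_ ?_ ?_
    · intro n hn
      simpa [Fin.tail] using fun i : Fin d => (mem_prodFiber.mp hn).2 i.succ
    · intro n hn
      have hn' : ∀ i, f (n i) = a i.succ := by simpa using hn
      refine mem_prodFiber.mpr ⟨by simp [Fin.prod_univ_succ], Fin.cases ?_ fun i => ?_⟩
      · beta_reduce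
        rw [Fin.cons_zero, map_div, map_prod, ← h, Fin.prod_univ_succ]
        simp [hn']
      · simp [hn']
    · intro n hn
      rw [← (mem_prodFiber.mp hn).1, Fin.prod_univ_succ]
      simp [Fin.tail]
    · intro n _
      exact Fin.tail_cons _ _
  rw [h_tail, Fintype.card_piFinset]
  simp [card_filter_eq_card_ker hf]

end Groups

section RingSums

lemma mul_prod_add_eq_of_pairwise_mul_eq_zero {R ι : Type*} [CommSemiring R] {s : Finset ι}
    {f : ι → R} (hf : (s : Set ι).Pairwise fun i j => f i * f j = 0) (x : R) :
    x * ∏ i ∈ s, (x + f i) = x ^ #s * (x + ∑ i ∈ s, f i) := by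
  classical
  induction s using Finset.induction_on with
  | empty => simp
  | insert a s ha ih =>
    rw [coe_insert] at hf
    have h_cross : f a * ∑ i ∈ s, f i = 0 := by
      rw [mul_sum]
      exact sum_eq_zero fun i hi =>
        hf (Set.mem_insert a _) (Set.mem_insert_of_mem a hi) (ne_of_mem_of_not_mem hi ha).symm
    rw [prod_insert ha, sum_insert ha, card_insert_of_notMem ha]
    calc
      x * ((x + f a) * ∏ i ∈ s, (x + f i)) = (x + f a) * (x * ∏ i ∈ s, (x + f i)) := by ring
      _ = x ^ #s * (x * (x + (f a + ∑ i ∈ s, f i)) + f a * ∑ i ∈ s, f i) := by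
        rw [ih (hf.mono (Set.subset_insert _ _))]
        ring
      _ = x ^ (#s + 1) * (x + (f a + ∑ i ∈ s, f i)) := by
        rw [h_cross]
        ring

lemma sum_mulSingle_div_mulSingle_mul {R ι : Type*} [Ring R] [Fintype ι] [DecidableEq ι]
    {i j : ι} (hij : i ≠ j) (u : Rˣ) (n : ι → Rˣ) :
    ∑ l, (((Pi.mulSingle i u / Pi.mulSingle j u : ι → Rˣ) * n) l : R) =
      ∑ l, (n l : R) + ((u : R) - 1) * n i + ((u⁻¹ : Rˣ) - 1 : R) * n j := by
  have h := Fintype.sum_eq_add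
    (f := fun l => (((Pi.mulSingle i u / Pi.mulSingle j u : ι → Rˣ) * n) l : R) - n l) i j hij
    fun l ⟨hi, hj⟩ => by simp [hi, hj]
  rw [sum_sub_distrib, sub_eq_iff_eq_add'] at h
  simpa [hij, hij.symm, sub_mul, add_assoc] using h

end RingSums

section Reduction

variable (m : ℕ)

/-- The ring homomorphism `ℤ/m² → ℤ/m`, whose kernel, the multiples of `m`, has square zero. -/
abbrev modHom : ZMod (m ^ 2) →+* ZMod m := ZMod.castHom (dvd_pow_self m two_ne_zero) (ZMod m)

/-- The group homomorphism `(ℤ/m²)ˣ → (ℤ/m)ˣ` induced by `modHom m`; it sorts the terms of the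
Kloosterman sum modulo `m ^ 2` into classes. -/
abbrev unitsModHom : (ZMod (m ^ 2))ˣ →* (ZMod m)ˣ := ZMod.unitsMap (dvd_pow_self m two_ne_zero)

variable {m}

lemma coe_unitsModHom (x : (ZMod (m ^ 2))ˣ) :
    (unitsModHom m x : ZMod m) = modHom m (x : ZMod (m ^ 2)) := rfl

lemma natCast_mul_self_eq_zero : (m : ZMod (m ^ 2)) * m = 0 := by
  rw [← Nat.cast_mul, ← sq, ZMod.natCast_self]

/-- The unit `1 + m` modulo `m ^ 2`, with inverse `1 - m`. It is trivial modulo `m`, and multiplying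
coordinates by it detects whether they agree modulo `m`. -/
def oneAddUnit (m : ℕ) : (ZMod (m ^ 2))ˣ where
  val := 1 + m
  inv := 1 - m
  val_inv := by linear_combination -natCast_mul_self_eq_zero (m := m)
  inv_val := by linear_combination -natCast_mul_self_eq_zero (m := m)

lemma unitsModHom_oneAddUnit : unitsModHom m (oneAddUnit m) = 1 := by
  ext
  simp [coe_unitsModHom, oneAddUnit, -ZMod.castHom_apply]

variable [NeZero m]

lemma modHom_eq_zero_iff {x : ZMod (m ^ 2)} : modHom m x = 0 ↔ (m : ZMod (m ^ 2)) * x = 0 := by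
  obtain ⟨k, rfl⟩ := ZMod.natCast_zmod_surjective x
  rw [map_natCast, ZMod.natCast_eq_zero_iff, ← Nat.cast_mul, ZMod.natCast_eq_zero_iff, sq,
    Nat.mul_dvd_mul_iff_left (NeZero.pos m)]

lemma mul_eq_zero_of_modHom_eq_zero {x y : ZMod (m ^ 2)} (hx : modHom m x = 0)
    (hy : modHom m y = 0) : x * y = 0 := by
  obtain ⟨k, rfl⟩ := ZMod.natCast_zmod_surjective x
  rw [map_natCast, ZMod.natCast_eq_zero_iff] at hx
  obtain ⟨c, rfl⟩ := hx
  rw [Nat.cast_mul, mul_right_comm, modHom_eq_zero_iff.mp hy, zero_mul]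

lemma natCast_mul_eq_natCast_mul_iff {x y : (ZMod (m ^ 2))ˣ} :
    (m : ZMod (m ^ 2)) * (x : ZMod (m ^ 2)) = m * (y : ZMod (m ^ 2)) ↔
      unitsModHom m x = unitsModHom m y := by
  rw [← sub_eq_zero, ← mul_sub, ← modHom_eq_zero_iff, map_sub, sub_eq_zero, Units.ext_iff,
    coe_unitsModHom, coe_unitsModHom]

lemma unitsModHom_surjective : Function.Surjective (unitsModHom m) :=
  ZMod.unitsMap_surjective _

lemma card_ker_unitsModHom : Nat.card (unitsModHom m).ker = m := by
  have h_index : (unitsModHom m).ker.index = m.totient := by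
    rw [Subgroup.index_ker, MonoidHom.range_eq_top.mpr unitsModHom_surjective, Subgroup.card_top,
      Nat.card_eq_fintype_card, ZMod.card_units_eq_totient]
  have h_totient : (m ^ 2).totient = m * m.totient := by
    have h := Nat.totient_gcd_mul_totient_mul m m
    rw [Nat.gcd_self, ← sq, mul_assoc] at h
    rw [Nat.eq_of_mul_eq_mul_left (Nat.totient_pos.mpr (NeZero.pos m)) h, mul_comm]
  have h_card := (unitsModHom m).ker.card_mul_index
  rw [h_index, Nat.card_eq_fintype_card (α := (ZMod (m ^ 2))ˣ), ZMod.card_units_eq_totient,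
    h_totient] at h_card
  exact Nat.eq_of_mul_eq_mul_right (Nat.totient_pos.mpr (NeZero.pos m)) h_card

end Reduction

section StationaryPhase

lemma Kl_eq_sum_stdAddChar {M : ℕ} [NeZero M] (d : ℕ) (r : (ZMod M)ˣ) :
    Kl d M r = ∑ n : Fin d → (ZMod M)ˣ with ∏ i, n i = r,
      ZMod.stdAddChar (∑ i, (n i : ZMod M)) := by
  rw [Kl, finsum_eq_sum_of_fintype, sum_filter]
  refine sum_congr rfl fun n _ => if_congr Iff.rfl ?_ rfl
  have h_cast : ∑ i, (n i : ZMod M) = ((∑ i, (n i : ZMod M).val : ℕ) : ZMod M) := by simp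
  rw [h_cast, ZMod.stdAddChar_apply, ZMod.toCircle_natCast, e, mul_div_assoc]

variable {m : ℕ} [NeZero m]

lemma Kl_sq_eq_sum_prodFiber (d : ℕ) (r : (ZMod (m ^ 2))ˣ) :
    Kl d (m ^ 2) r = ∑ a : Fin d → (ZMod m)ˣ, ∑ n ∈ prodFiber (unitsModHom m) r a,
      ZMod.stdAddChar (∑ i, (n i : ZMod (m ^ 2))) := by
  rw [Kl_eq_sum_stdAddChar, ← sum_fiberwise _ fun n i => unitsModHom m (n i)]
  refine sum_congr rfl fun a _ => sum_congr ?_ fun _ _ => rfl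
  ext n
  simp [mem_prodFiber, funext_iff]

lemma sum_prodFiber_eq_zero {ι : Type*} [Fintype ι] [DecidableEq ι] (r : (ZMod (m ^ 2))ˣ)
    {a : ι → (ZMod m)ˣ} {i j : ι} (hij : a i ≠ a j) :
    ∑ n ∈ prodFiber (unitsModHom m) r a,
      (ZMod.stdAddChar (∑ l, (n l : ZMod (m ^ 2))) : ℂ) = 0 := by
  obtain ⟨x, hx⟩ := unitsModHom_surjective (a i)
  obtain ⟨y, hy⟩ := unitsModHom_surjective (a j)
  let k : ι → (ZMod (m ^ 2))ˣ := Pi.mulSingle i (oneAddUnit m) / Pi.mulSingle j (oneAddUnit m)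
  let c : ZMod (m ^ 2) := m * x - m * y
  have hk : k ∈ prodFiber (unitsModHom m) 1 1 :=
    mulSingle_div_mulSingle_mem_prodFiber unitsModHom_oneAddUnit i j
  have hk_sum {n : ι → (ZMod (m ^ 2))ˣ} (hn : n ∈ prodFiber (unitsModHom m) r a) :
      ∑ l, ((k * n) l : ZMod (m ^ 2)) = c + ∑ l, (n l : ZMod (m ^ 2)) := by
    have hn_map := (mem_prodFiber.mp hn).2
    have hi := natCast_mul_eq_natCast_mul_iff.mpr ((hn_map i).trans hx.symm)
    have hj := natCast_mul_eq_natCast_mul_iff.mpr ((hn_map j).trans hy.symm)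
    rw [sum_mulSingle_div_mulSingle_mul (ne_of_apply_ne a hij)]
    simp only [oneAddUnit, Units.inv_mk, c]
    linear_combination hi - hj
  have hc : (ZMod.stdAddChar c : ℂ) ≠ 1 := by
    rw [← AddChar.map_zero_eq_one (ZMod.stdAddChar (N := m ^ 2)),
      ZMod.injective_stdAddChar.ne_iff, sub_ne_zero, Ne, natCast_mul_eq_natCast_mul_iff, hx, hy]
    exact hij
  refine eq_zero_of_mul_eq_self_left hc ?_
  rw [mul_sum]
  refine sum_equiv (Equiv.mulLeft k) (fun n => (mul_mem_prodFiber_iff hk).symm) fun n hn => ?_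
  rw [Equiv.coe_mulLeft, hk_sum hn, AddChar.map_add_eq_mul]

lemma sum_eq_of_mem_prodFiber_const {d : ℕ} {r x : (ZMod (m ^ 2))ˣ}
    {n : Fin (d + 1) → (ZMod (m ^ 2))ˣ}
    (hn : n ∈ prodFiber (unitsModHom m) r fun _ => unitsModHom m x) :
    ∑ i, (n i : ZMod (m ^ 2)) = d * x + (r / x ^ d : (ZMod (m ^ 2))ˣ) := by
  obtain ⟨hn_prod, hn_map⟩ := mem_prodFiber.mp hn
  have h_sub (i) : modHom m ((n i : ZMod (m ^ 2)) - x) = 0 := by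
    rw [map_sub, ← coe_unitsModHom, ← coe_unitsModHom, hn_map, sub_self]
  have h_prod : (x : ZMod (m ^ 2)) * r = x ^ (d + 1) * (x + ∑ i, ((n i : ZMod (m ^ 2)) - x)) := by
    have h := mul_prod_add_eq_of_pairwise_mul_eq_zero (s := univ)
      (fun i _ j _ _ => mul_eq_zero_of_modHom_eq_zero (h_sub i) (h_sub j)) (x : ZMod (m ^ 2))
    rw [← hn_prod, Units.coe_prod]
    simpa using h
  have h_cancel : (r : ZMod (m ^ 2)) = x ^ d * (r / x ^ d : (ZMod (m ^ 2))ˣ) := by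
    rw [← Units.val_pow_eq_pow_val, ← Units.val_mul, mul_div_cancel]
  simp only [sum_sub_distrib, sum_const, card_univ, Fintype.card_fin, nsmul_eq_mul] at h_prod
  push_cast at h_prod
  refine (x ^ (d + 1)).isUnit.mul_left_cancel ?_
  push_cast [Units.val_pow_eq_pow_val]
  linear_combination -h_prod + (x : ZMod (m ^ 2)) * h_cancel

lemma sum_prodFiber_const (d : ℕ) (r x : (ZMod (m ^ 2))ˣ) :
    ∑ n ∈ prodFiber (unitsModHom m) r fun _ : Fin (d + 1) => unitsModHom m x,
      (ZMod.stdAddChar (∑ i, (n i : ZMod (m ^ 2))) : ℂ) =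
      if unitsModHom m x ^ (d + 1) = unitsModHom m r then
        m ^ d * ZMod.stdAddChar (d * x + (r / x ^ d : (ZMod (m ^ 2))ˣ) : ZMod (m ^ 2))
      else 0 := by
  split_ifs with h
  · rw [sum_congr rfl fun n hn => by rw [sum_eq_of_mem_prodFiber_const hn], sum_const,
      card_prodFiber unitsModHom_surjective (by simpa using h), card_ker_unitsModHom,
      nsmul_eq_mul, Nat.cast_pow]
  · rw [prodFiber_eq_empty (by simpa using h), sum_empty]

theorem Kl_succ_sq (d : ℕ) (r : (ZMod (m ^ 2))ˣ) {s : (ZMod m)ˣ → (ZMod (m ^ 2))ˣ}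
    (hs : Function.RightInverse s (unitsModHom m)) :
    Kl (d + 1) (m ^ 2) r = m ^ d * ∑ α : (ZMod m)ˣ with α ^ (d + 1) = unitsModHom m r,
      ZMod.stdAddChar (d * s α + (r / s α ^ d : (ZMod (m ^ 2))ˣ) : ZMod (m ^ 2)) := by
  have h_const (α : (ZMod m)ˣ) := hs α ▸ sum_prodFiber_const d r (s α)
  rw [Kl_sq_eq_sum_prodFiber, mul_sum, sum_filter, ← sum_congr rfl fun α _ => h_const α]
  refine (sum_of_injOn (fun α _ => α) (fun α _ β _ h => congrFun h 0) (by simp) ?_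
    fun _ _ => rfl).symm
  intro a _ ha
  obtain ⟨i, hi⟩ : ∃ i, a 0 ≠ a i := by
    contrapose! ha
    exact ⟨a 0, by simp, funext ha⟩
  exact sum_prodFiber_eq_zero r hi

theorem Kl_succ_sq_ne_zero_iff {p : ℕ} [Fact p.Prime] (d : ℕ) (r : (ZMod (p ^ 2))ˣ) :
    Kl (d + 1) (p ^ 2) r ≠ 0 ↔ ∃ α : (ZMod p)ˣ, α ^ (d + 1) = unitsModHom p r := by
  obtain ⟨s, hs⟩ := (unitsModHom_surjective (m := p)).hasRightInverse
  rw [Kl_succ_sq d r hs]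
  set A : Finset (ZMod p)ˣ := {α | α ^ (d + 1) = unitsModHom p r}
  constructor
  · intro h
    obtain ⟨α, hα, -⟩ := exists_ne_zero_of_sum_ne_zero (right_ne_zero_of_mul h)
    exact ⟨α, (mem_filter.mp hα).2⟩
  · rintro ⟨α, hα⟩
    have hA_pos : 0 < #A := card_pos.mpr ⟨α, by simpa [A] using hα⟩
    have hA_lt : #A < p := by
      refine (card_le_univ A).trans_lt ?_
      rw [ZMod.card_units_eq_totient]
      exact Nat.totient_lt p (Fact.out (p := p.Prime)).one_lt
    refine mul_ne_zero (pow_ne_zero _ (NeZero.ne _)) fun h => ?_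
    exact Nat.not_dvd_of_pos_of_lt hA_pos hA_lt
      (prime_dvd_card_of_sum_stdAddChar_eq_zero (k := 1) h)

end StationaryPhase

theorem stmt0_general (p : ℕ) [Fact p.Prime] (d : ℕ) (hd : 1 ≤ d) (r : (ZMod (p ^ 2))ˣ) :
    Kl d (p ^ 2) r ≠ 0 ↔
      (ZMod.castHom (dvd_pow_self p (by norm_num : (2 : ℕ) ≠ 0)) (ZMod p)
          (r : ZMod (p ^ 2))) ^ ((p - 1) / Nat.gcd d (p - 1)) = 1 := by
  obtain ⟨d, rfl⟩ := Nat.exists_eq_add_of_le' hd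
  rw [Kl_succ_sq_ne_zero_iff, exists_pow_eq_iff_pow_card_div_gcd_eq_one,
    Nat.card_eq_fintype_card, ZMod.card_units, Units.ext_iff, Units.val_pow_eq_pow_val,
    Units.val_one, coe_unitsModHom]

theorem stmt0 (p : ℕ) [Fact p.Prime] (hodd : Odd p) (d : ℕ) (hd : 1 ≤ d)
    (r : (ZMod (p ^ 2))ˣ) :
    Kl d (p ^ 2) r ≠ 0 ↔
      (ZMod.castHom (dvd_pow_self p (by norm_num : (2 : ℕ) ≠ 0)) (ZMod p)
          (r : ZMod (p ^ 2))) ^ ((p - 1) / Nat.gcd d (p - 1)) = 1 :=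
  stmt0_general p d hd r
end

section
/- Let K be a totally real number field of degree d that is Galois over ℚ with solvable Galois group, let p be an odd prime with p ∤ d_K, and fix an integer n ≥ 1. Then there exists a nonzero constant C ∈ ℂ, depending only on K and n, such that for every primitive Dirichlet character ψ modulo p^n one has τ(ψ∘N) = C · ψ(d_K) · τ(ψ)^d, where τ(ψ) = Σ_{a mod p^n} ψ(a) e(a/p^n) is the Dirichlet Gauss sum of ψ. -/
open scoped BigOperators

/-- Gauss sum of a Dirichlet character mod `M`: `τ(φ) = Σ_{a mod M} φ(a) e(a/M)`. -/
noncomputable def tau {M : ℕ} (φ : DirichletCharacter ℂ M) : ℂ :=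
  ∑ᶠ a : ZMod M, φ a * e ((a.val : ℂ) / M)

/-- A choice of representative in `R` of a residue class in `R ⧸ I`. -/
noncomputable def rep {R : Type*} [CommRing R] {I : Ideal R} (x : R ⧸ I) : R :=
  Function.surjInv Ideal.Quotient.mk_surjective x

/-- The Gauss sum `τ(φ∘N)` of the cyclotomic ray class character `φ ∘ N_{K/ℚ}` over `K`
attached to a Dirichlet character `φ` mod `M`:
`τ(φ∘N) = φ(d_K) Σ_{α ∈ (O_K/M O_K)ˣ} φ(N(α)) e(Tr(α)/M)`,
where the norm and trace of a residue class are computed on a representative and then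
reduced mod `M`. -/
noncomputable def tauN (K : Type*) [Field K] [NumberField K] (M : ℕ)
    (φ : DirichletCharacter ℂ M) : ℂ :=
  φ ((NumberField.discr K : ZMod M)) *
    ∑ᶠ α : (NumberField.RingOfIntegers K ⧸
        Ideal.span {(M : NumberField.RingOfIntegers K)})ˣ,
      φ (((Algebra.norm ℤ
            (rep (α : NumberField.RingOfIntegers K ⧸
              Ideal.span {(M : NumberField.RingOfIntegers K)})) : ℤ) : ZMod M)) *
        e ((((Algebra.trace ℤ (NumberField.RingOfIntegers K)
            (rep (α : NumberField.RingOfIntegers K ⧸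
              Ideal.span {(M : NumberField.RingOfIntegers K)})) : ℤ) : ZMod M).val : ℂ) / M)

/-!
The prime `p` is unramified, so `R = 𝓞 K / p ^ n` is a free `ℤ/p ^ n`-algebra whose trace form is
nondegenerate, and `τ(ψ ∘ N)` is, up to `ψ(d_K)`, the sum of `ψ(N α) e(Tr α / p ^ n)` over `R`.

If `n = 1`, then `R` is reduced, hence a product of finite fields, and the Hasse–Davenport relation
on each factor gives the result.

If `n ≥ 2`, put `m = ⌊n/2⌋`. Then `ψ(exp (p ^ m t)) = e(c p ^ m t / p ^ n)` for the truncated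
exponential `exp x = 1 + x + x ^ 2 / 2` and some `c`, a unit because `ψ` is primitive. Invariance of
the sum under `α ↦ α (1 + p ^ (n - m) y)` confines it to `α ≡ -c` modulo `p ^ m`, that is, to
`α = -c exp (p ^ m z)`. As `N (exp x) = exp (Tr x)` on these `x`, the terms linear in `z` cancel,
and what is left is `(ψ(-c) e(-c / p ^ n)) ^ d` times a quadratic Gauss sum of the trace form.
Diagonalizing that form over `𝔽_p`, this sum is the `d`-th power of the one-dimensional sum up to a
factor independent of `ψ`. Comparison with the same computation for `R = ℤ/p ^ n` gives the result.
-/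

namespace CyclotomicGaussSum

open Finset

section MonicPolynomials

open Polynomial UniqueFactorizationMonoid

variable {F : Type*} [Field F] {R : Type*} [CommRing R]

/-- The completely multiplicative weight `μ(N f) χ(Tr f)` of a monic polynomial `f`, where `N f` and
`Tr f` denote the product and the sum of the roots of `f`. -/
noncomputable def monicWeight (μ : MulChar F R) (χ : AddChar F R) (f : F[X]) : R :=
  μ ((-1) ^ f.natDegree * f.coeff 0) * χ (-f.nextCoeff)

theorem monicWeight_one (μ : MulChar F R) (χ : AddChar F R) : monicWeight μ χ 1 = 1 := by
  simp [monicWeight, nextCoeff]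

theorem monicWeight_mul (μ : MulChar F R) (χ : AddChar F R) {f g : F[X]} (hf : f.Monic)
    (hg : g.Monic) : monicWeight μ χ (f * g) = monicWeight μ χ f * monicWeight μ χ g := by
  rw [monicWeight, hf.nextCoeff_mul hg, hf.natDegree_mul hg, mul_coeff_zero, neg_add,
    AddChar.map_add_eq_mul, pow_add, mul_mul_mul_comm, map_mul, mul_mul_mul_comm, monicWeight,
    monicWeight]

theorem monicWeight_pow (μ : MulChar F R) (χ : AddChar F R) {f : F[X]} (hf : f.Monic) (j : ℕ) :
    monicWeight μ χ (f ^ j) = monicWeight μ χ f ^ j := by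
  induction j with
  | zero => simp [monicWeight_one]
  | succ j ih => rw [pow_succ, monicWeight_mul μ χ (hf.pow j) hf, ih, pow_succ]

theorem finite_setOf_monic_natDegree_eq [Finite F] (k : ℕ) :
    {f : F[X] | f.Monic ∧ f.natDegree = k}.Finite := by
  have : Finite (degreeLT F k) := Finite.of_equiv _ (degreeLTEquiv F k).symm.toEquiv
  exact Set.finite_coe_iff.mp (Finite.of_equiv _ (monicEquivDegreeLT (R := F) k).symm)

variable (F) in
/-- The monic polynomials of degree `k` over a finite field. -/
noncomputable def monicsOfDegree [Finite F] (k : ℕ) : Finset F[X] :=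
  (finite_setOf_monic_natDegree_eq k).toFinset

@[simp]
theorem mem_monicsOfDegree [Finite F] {k : ℕ} {f : F[X]} :
    f ∈ monicsOfDegree F k ↔ f.Monic ∧ f.natDegree = k := by
  simp [monicsOfDegree]

theorem finite_setOf_primePower_natDegree_eq [Finite F] (r : ℕ) :
    {x : F[X] × ℕ | x.1.Monic ∧ Irreducible x.1 ∧ 0 < x.2 ∧ x.2 * x.1.natDegree = r}.Finite := by
  classical
  refine (((range (r + 1)).biUnion (monicsOfDegree F)) ×ˢ range (r + 1)).finite_toSet.subset ?_
  rintro ⟨P, j⟩ ⟨hP, hirr, hj, rfl⟩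
  have hle : P.natDegree ≤ j * P.natDegree := Nat.le_mul_of_pos_left _ hj
  have hle' : j ≤ j * P.natDegree := Nat.le_mul_of_pos_right _ hirr.natDegree_pos
  simp only [coe_product, Set.mem_prod, mem_coe, mem_biUnion, mem_range, mem_monicsOfDegree]
  exact ⟨⟨_, Nat.lt_succ_of_le hle, hP, rfl⟩, Nat.lt_succ_of_le hle'⟩

variable (F) in
/-- The prime powers `P ^ j` of degree `r` in the monoid of monic polynomials over a finite field,
encoded as pairs `(P, j)` with `0 < j`. -/
noncomputable def primePowersOfDegree [Finite F] (r : ℕ) : Finset (F[X] × ℕ) :=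
  (finite_setOf_primePower_natDegree_eq r).toFinset

@[simp]
theorem mem_primePowersOfDegree [Finite F] {r : ℕ} {x : F[X] × ℕ} :
    x ∈ primePowersOfDegree F r ↔
      x.1.Monic ∧ Irreducible x.1 ∧ 0 < x.2 ∧ x.2 * x.1.natDegree = r := by
  simp [primePowersOfDegree]

theorem primePowersOfDegree_zero [Finite F] : primePowersOfDegree F 0 = ∅ := by
  ext ⟨P, j⟩
  simp only [mem_primePowersOfDegree, notMem_empty, iff_false]
  rintro ⟨-, hirr, hj, h⟩
  exact (Nat.mul_pos hj hirr.natDegree_pos).ne' h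

theorem pow_dvd_iff_le_count_normalizedFactors [DecidableEq F] {f P : F[X]} (hf : f ≠ 0)
    (hP : P.Monic) (hirr : Irreducible P) (j : ℕ) :
    P ^ j ∣ f ↔ j ≤ (normalizedFactors f).count P := by
  rw [pow_dvd_iff_le_emultiplicity,
    emultiplicity_eq_count_normalizedFactors hirr hf,
    hP.normalize_eq_self, Nat.cast_le]

theorem natDegree_eq_sum_normalizedFactors [DecidableEq F] {f : F[X]} (hf : f.Monic) :
    f.natDegree = ∑ P ∈ (normalizedFactors f).toFinset,
      (normalizedFactors f).count P * P.natDegree := by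
  conv_lhs => rw [← hf.normalize_eq_self,
    ← prod_normalizedFactors_eq hf.ne_zero,
    natDegree_multiset_prod _ (zero_notMem_normalizedFactors f),
    sum_multiset_map_count]
  simp only [smul_eq_mul]

open scoped Classical in
/-- Each irreducible factor `P` of multiplicity `m` is counted once for each of `P, P², …, P^m`. -/
theorem natDegree_eq_sum_primePowersOfDegree [Finite F] {f : F[X]} (hf : f.Monic) :
    f.natDegree = ∑ r ∈ range (f.natDegree + 1), ∑ x ∈ primePowersOfDegree F r with x.1 ^ x.2 ∣ f,
      x.1.natDegree := by
  have hdisj : Set.PairwiseDisjoint (range (f.natDegree + 1) : Set ℕ)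
      fun r => (primePowersOfDegree F r).filter fun x => x.1 ^ x.2 ∣ f := by
    refine fun r _ r' _ hne => Finset.disjoint_left.mpr fun x hx hx' => hne ?_
    simp only [mem_filter, mem_primePowersOfDegree] at hx hx'
    exact hx.1.2.2.2.symm.trans hx'.1.2.2.2
  rw [← sum_biUnion hdisj,
    sum_finset_product _ (normalizedFactors f).toFinset
      fun P => Icc 1 ((normalizedFactors f).count P)]
  · simp only [sum_const, Nat.card_Icc, Nat.add_sub_cancel, smul_eq_mul]
    exact natDegree_eq_sum_normalizedFactors hf
  · rintro ⟨P, j⟩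
    simp only [mem_biUnion, mem_range, mem_filter, mem_primePowersOfDegree, Multiset.mem_toFinset,
      Polynomial.mem_normalizedFactors_iff hf.ne_zero, mem_Icc]
    constructor
    · rintro ⟨r, -, ⟨hP, hirr, hj, -⟩, hdvd⟩
      exact ⟨⟨hirr, hP, (dvd_pow_self P hj.ne').trans hdvd⟩, hj,
        (pow_dvd_iff_le_count_normalizedFactors hf.ne_zero hP hirr j).mp hdvd⟩
    · rintro ⟨⟨hirr, hP, -⟩, hj, hle⟩
      have hdvd := (pow_dvd_iff_le_count_normalizedFactors hf.ne_zero hP hirr j).mpr hle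
      have hdeg := natDegree_le_of_dvd hdvd hf.ne_zero
      rw [hP.natDegree_pow] at hdeg
      exact ⟨_, Nat.lt_succ_of_le hdeg, ⟨hP, hirr, hj, rfl⟩, hdvd⟩

/-- The coefficient of degree `k` of the L-series `∑ f, monicWeight μ χ f * T ^ deg f`. -/
noncomputable def monicSum [Finite F] (μ : MulChar F R) (χ : AddChar F R) (k : ℕ) : R :=
  ∑ f ∈ monicsOfDegree F k, monicWeight μ χ f

/-- The coefficient of degree `r` of the logarithmic derivative of the L-series whose coefficients
are `monicSum μ χ`. -/
noncomputable def primePowerSum [Finite F] (μ : MulChar F R) (χ : AddChar F R) (r : ℕ) : R :=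
  ∑ x ∈ primePowersOfDegree F r, x.1.natDegree * monicWeight μ χ x.1 ^ x.2

theorem monicSum_zero [Finite F] (μ : MulChar F R) (χ : AddChar F R) : monicSum μ χ 0 = 1 := by
  have hone : monicsOfDegree F 0 = {1} := by
    ext f
    rw [mem_monicsOfDegree, mem_singleton]
    exact ⟨fun h => h.1.natDegree_eq_zero.mp h.2, by rintro rfl; simp⟩
  rw [monicSum, hone, sum_singleton, monicWeight_one]

theorem monicSum_one [Fintype F] (μ : MulChar F R) (χ : AddChar F R) :
    monicSum μ χ 1 = gaussSum μ χ := by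
  refine (sum_bij (fun a _ => X - C a) (fun a _ => ?_) (fun a _ b _ h => by simpa using h)
    (fun f hf => ?_) fun a _ => by simp [monicWeight]).symm
  · exact mem_monicsOfDegree.mpr ⟨monic_X_sub_C a, natDegree_X_sub_C a⟩
  · obtain ⟨hf, hdeg⟩ := mem_monicsOfDegree.mp hf
    have hlead : f.coeff 1 = 1 := hdeg ▸ hf.coeff_natDegree
    refine ⟨-f.coeff 0, mem_univ _, ?_⟩
    conv_rhs => rw [eq_X_add_C_of_natDegree_le_one hdeg.le, hlead]
    simp

theorem monic_add_C_mul_X_pow {f : F[X]} {k : ℕ} (hf : f.Monic) (hdeg : f.natDegree = k + 2)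
    (b : F) : (f + C b * X ^ (k + 1)).Monic ∧ (f + C b * X ^ (k + 1)).natDegree = k + 2 := by
  have hlt : (C b * X ^ (k + 1)).degree < f.degree := by
    rw [degree_eq_natDegree hf.ne_zero, hdeg]
    exact (degree_C_mul_X_pow_le _ _).trans_lt (by exact_mod_cast Nat.lt_succ_self (k + 1))
  exact ⟨hf.add_of_left hlt,
    (natDegree_eq_of_degree_eq (degree_add_eq_left_of_degree_lt hlt)).trans hdeg⟩

theorem monicWeight_add_C_mul_X_pow (μ : MulChar F R) (χ : AddChar F R) {f : F[X]} {k : ℕ}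
    (hf : f.Monic) (hdeg : f.natDegree = k + 2) (b : F) :
    monicWeight μ χ (f + C b * X ^ (k + 1)) = χ (-b) * monicWeight μ χ f := by
  have hdeg' := (monic_add_C_mul_X_pow hf hdeg b).2
  rw [monicWeight, monicWeight, nextCoeff_of_natDegree_pos (by lia),
    nextCoeff_of_natDegree_pos (by lia), hdeg', hdeg]
  simp only [coeff_add, coeff_C_mul, coeff_X_pow, Nat.add_one_sub_one, if_true, mul_one,
    (Nat.succ_ne_zero k).symm, if_false, mul_zero, add_zero, neg_add, AddChar.map_add_eq_mul]
  ring

/-- Translating the coefficient of `X ^ (k + 1)` multiplies the sum by a nontrivial value of `χ`. -/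
theorem monicSum_add_two [Finite F] [IsDomain R] (μ : MulChar F R) {χ : AddChar F R} (hχ : χ ≠ 1)
    (k : ℕ) : monicSum μ χ (k + 2) = 0 := by
  obtain ⟨c, hc⟩ := AddChar.ne_one_iff.mp hχ
  have hmem (b : F) (f : F[X]) (hf : f ∈ monicsOfDegree F (k + 2)) :
      f + C b * X ^ (k + 1) ∈ monicsOfDegree F (k + 2) := by
    rw [mem_monicsOfDegree] at hf ⊢
    exact monic_add_C_mul_X_pow hf.1 hf.2 b
  have hshift : monicSum μ χ (k + 2) = χ c * monicSum μ χ (k + 2) := by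
    conv_rhs => rw [monicSum, mul_sum]
    refine sum_bij' (fun f _ => f + C c * X ^ (k + 1)) (fun f _ => f + C (-c) * X ^ (k + 1))
      (hmem c) (hmem (-c)) (by simp) (by simp) fun f hf => ?_
    obtain ⟨hf, hdeg⟩ := mem_monicsOfDegree.mp hf
    rw [monicWeight_add_C_mul_X_pow μ χ hf hdeg, ← mul_assoc, ← AddChar.map_add_eq_mul,
      add_neg_cancel, AddChar.map_zero_eq_one, one_mul]
  exact (mul_eq_zero.mp (by linear_combination hshift :
    (1 - χ c) * monicSum μ χ (k + 2) = 0)).resolve_left (sub_ne_zero.mpr (Ne.symm hc))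

open scoped Classical in
theorem sum_monicWeight_of_dvd [Finite F] (μ : MulChar F R) (χ : AddChar F R) {Q : F[X]}
    (hQ : Q.Monic) (k : ℕ) :
    ∑ f ∈ monicsOfDegree F (Q.natDegree + k) with Q ∣ f, monicWeight μ χ f =
      monicWeight μ χ Q * monicSum μ χ k := by
  rw [monicSum, mul_sum]
  refine (sum_bij (fun g _ => Q * g) (fun g hg => ?_) (fun _ _ _ _ => mul_left_cancel₀ hQ.ne_zero)
    (fun f hf => ?_) fun g hg => ?_).symm
  · obtain ⟨hg, hdeg⟩ := mem_monicsOfDegree.mp hg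
    rw [mem_filter, mem_monicsOfDegree, hQ.natDegree_mul hg, hdeg]
    exact ⟨⟨hQ.mul hg, rfl⟩, dvd_mul_right _ _⟩
  · rw [mem_filter, mem_monicsOfDegree] at hf
    obtain ⟨⟨hf, hdeg⟩, g, rfl⟩ := hf
    have hg : g.Monic := hQ.of_mul_monic_left hf
    rw [hQ.natDegree_mul hg] at hdeg
    exact ⟨g, mem_monicsOfDegree.mpr ⟨hg, Nat.add_left_cancel hdeg⟩, rfl⟩
  · exact (monicWeight_mul μ χ hQ (mem_monicsOfDegree.mp hg).1).symm

/-- Newton's identity, i.e. `L' = (L' / L) L`, read off from the degree-weighted count of the prime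
powers dividing each polynomial. -/
theorem mul_monicSum [Finite F] (μ : MulChar F R) (χ : AddChar F R) (n : ℕ) :
    n * monicSum μ χ n =
      ∑ x ∈ antidiagonal n, primePowerSum μ χ x.1 * monicSum μ χ x.2 := by
  classical
  have hcount : ∀ f ∈ monicsOfDegree F n, n * monicWeight μ χ f = ∑ r ∈ range (n + 1),
      ∑ x ∈ primePowersOfDegree F r,
        if x.1 ^ x.2 ∣ f then x.1.natDegree * monicWeight μ χ f else 0 := by
    intro f hf
    obtain ⟨hmonic, rfl⟩ := mem_monicsOfDegree.mp hf
    conv_lhs => rw [natDegree_eq_sum_primePowersOfDegree hmonic]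
    push_cast
    simp only [sum_mul, sum_filter, ite_mul, zero_mul]
  rw [monicSum, mul_sum, sum_congr rfl hcount, sum_comm,
    Nat.sum_antidiagonal_eq_sum_range_succ fun r s => primePowerSum μ χ r * monicSum μ χ s]
  refine sum_congr rfl fun r hr => ?_
  rw [sum_comm, primePowerSum, sum_mul]
  refine sum_congr rfl fun x hx => ?_
  obtain ⟨hP, -, -, hdeg⟩ := mem_primePowersOfDegree.mp hx
  rw [← hP.natDegree_pow] at hdeg
  have hn : n = (x.1 ^ x.2).natDegree + (n - r) := by
    rw [hdeg, Nat.add_sub_cancel' (Nat.lt_succ_iff.mp (mem_range.mp hr))]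
  rw [← sum_filter, ← mul_sum]
  conv_lhs => rw [hn]
  rw [sum_monicWeight_of_dvd μ χ (hP.pow _), monicWeight_pow μ χ hP, mul_assoc]

theorem primePowerSum_zero [Finite F] (μ : MulChar F R) (χ : AddChar F R) :
    primePowerSum μ χ 0 = 0 := by
  rw [primePowerSum, primePowersOfDegree_zero, sum_empty]

/-- For nontrivial `χ` the L-series is the polynomial `1 + gaussSum μ χ * T`. -/
theorem primePowerSum_succ [Fintype F] [IsDomain R] (μ : MulChar F R) {χ : AddChar F R}
    (hχ : χ ≠ 1) (n : ℕ) :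
    primePowerSum μ χ (n + 1) = (-1) ^ n * gaussSum μ χ ^ (n + 1) := by
  induction n with
  | zero =>
    have hnewton := mul_monicSum μ χ 1
    rw [Nat.sum_antidiagonal_succ, Nat.antidiagonal_zero, sum_singleton, primePowerSum_zero,
      monicSum_one, monicSum_zero] at hnewton
    linear_combination -hnewton
  | succ n ih =>
    have hnewton := mul_monicSum μ χ (n + 2)
    have hvanish : ∑ x ∈ antidiagonal n, primePowerSum μ χ x.1 * monicSum μ χ (x.2 + 2) = 0 :=
      sum_eq_zero fun x _ => by rw [monicSum_add_two μ hχ, mul_zero]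
    rw [Nat.sum_antidiagonal_succ', Nat.sum_antidiagonal_succ', monicSum_add_two μ hχ, hvanish,
      monicSum_zero, zero_add, monicSum_one, ih] at hnewton
    linear_combination -hnewton

end MonicPolynomials

section AlgebraGaussSum

variable {Z R C : Type*} [CommRing Z] [CommRing R] [Algebra Z R] [CommRing C]

variable (R) in
/-- The Gauss sum over a finite `Z`-algebra `R` of the characters `μ ∘ norm` and `χ ∘ trace`. -/
noncomputable def algebraGaussSum [Fintype R] (μ : MulChar Z C) (χ : AddChar Z C) : C :=
  ∑ x : R, μ (Algebra.norm Z x) * χ (Algebra.trace Z R x)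

theorem algebraGaussSum_self [Fintype Z] (μ : MulChar Z C) (χ : AddChar Z C) :
    algebraGaussSum Z μ χ = gaussSum μ χ := by
  simp [algebraGaussSum, gaussSum, Algebra.norm_self]

theorem algebraGaussSum_congr {R' : Type*} [CommRing R'] [Algebra Z R'] [Fintype R] [Fintype R']
    (e : R ≃ₐ[Z] R') (μ : MulChar Z C) (χ : AddChar Z C) :
    algebraGaussSum R μ χ = algebraGaussSum R' μ χ :=
  Fintype.sum_bijective e e.bijective _ _ fun x => by
    rw [Algebra.norm_eq_of_algEquiv, Algebra.trace_eq_of_algEquiv]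

theorem isUnit_of_isUnit_norm [Module.Free Z R] [Module.Finite Z R] {x : R}
    (hx : IsUnit (Algebra.norm Z x)) : IsUnit x := by
  rw [Algebra.norm_apply, ← LinearMap.isUnit_iff_isUnit_det, Module.End.isUnit_iff] at hx
  obtain ⟨y, hy⟩ := hx.surjective 1
  exact .of_mul_eq_one y hy

theorem finsum_units_eq_algebraGaussSum [Module.Free Z R] [Module.Finite Z R] [Fintype R]
    (μ : MulChar Z C) (χ : AddChar Z C) :
    ∑ᶠ α : Rˣ, μ (Algebra.norm Z (α : R)) * χ (Algebra.trace Z R (α : R)) =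
      algebraGaussSum R μ χ := by
  rw [algebraGaussSum, ← finsum_eq_sum_of_fintype,
    ← finsum_mem_range (f := fun x : R => μ (Algebra.norm Z x) * χ (Algebra.trace Z R x))
      Units.val_injective]
  refine finsum_congr fun x => ?_
  by_cases hx : IsUnit x
  · obtain ⟨u, rfl⟩ := hx
    simp
  · rw [μ.map_nonunit fun h => hx (isUnit_of_isUnit_norm h)]
    simp

section Pi

theorem addChar_sum {G M κ : Type*} [AddCommMonoid G] [CommMonoid M] (χ : AddChar G M)
    (s : Finset κ) (f : κ → G) : χ (∑ i ∈ s, f i) = ∏ i ∈ s, χ (f i) :=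
  map_prod χ.toMonoidHom (fun i => Multiplicative.ofAdd (f i)) s

variable {ι : Type*} [Fintype ι] {A : ι → Type*} [∀ i, CommRing (A i)] [∀ i, Algebra Z (A i)]

theorem leftMulMatrix_piBasis [DecidableEq ι] {κ : ι → Type*} [∀ i, Fintype (κ i)]
    [∀ i, DecidableEq (κ i)] (b : ∀ i, Module.Basis (κ i) Z (A i)) (x : ∀ i, A i) :
    Algebra.leftMulMatrix (Pi.basis b) x =
      Matrix.blockDiagonal' fun i => Algebra.leftMulMatrix (b i) (x i) := by
  ext ⟨i, k⟩ ⟨j, l⟩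
  rw [Algebra.leftMulMatrix_eq_repr_mul, Pi.basis_repr, Pi.basis_apply, Pi.mul_apply]
  rcases eq_or_ne i j with rfl | hij
  · rw [Pi.single_eq_same, Matrix.blockDiagonal'_apply_eq, Algebra.leftMulMatrix_eq_repr_mul]
  · rw [Pi.single_eq_of_ne hij, mul_zero, map_zero, Matrix.blockDiagonal'_apply_ne _ _ _ hij]
    rfl

theorem det_blockDiagonal' [DecidableEq ι] {κ : ι → Type*} [∀ i, Fintype (κ i)]
    [∀ i, DecidableEq (κ i)] (M : ∀ i, Matrix (κ i) (κ i) Z) :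
    (Matrix.blockDiagonal' M).det = ∏ i, (M i).det := by
  let : LinearOrder ι := LinearOrder.lift' (Fintype.equivFin ι) (Fintype.equivFin ι).injective
  rw [(Matrix.blockTriangular_blockDiagonal' M).det_fintype]
  refine prod_congr rfl fun i _ => ?_
  rw [← Matrix.det_submatrix_equiv_self (Equiv.sigmaSubtype i).symm]
  congr 1
  ext k l
  exact Matrix.blockDiagonal'_apply_eq M i k l

variable [∀ i, Module.Free Z (A i)] [∀ i, Module.Finite Z (A i)]

theorem norm_pi_apply (x : ∀ i, A i) : Algebra.norm Z x = ∏ i, Algebra.norm Z (x i) := by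
  classical
  rw [Algebra.norm_eq_matrix_det (Pi.basis fun i => Module.Free.chooseBasis Z (A i)),
    leftMulMatrix_piBasis, det_blockDiagonal']
  exact prod_congr rfl fun i _ => (Algebra.norm_eq_matrix_det _ _).symm

theorem trace_pi_apply (x : ∀ i, A i) :
    Algebra.trace Z (∀ i, A i) x = ∑ i, Algebra.trace Z (A i) (x i) := by
  classical
  rw [Algebra.trace_eq_matrix_trace (Pi.basis fun i => Module.Free.chooseBasis Z (A i)),
    leftMulMatrix_piBasis, Matrix.trace_blockDiagonal']
  exact sum_congr rfl fun i _ => (Algebra.trace_eq_matrix_trace _ _).symm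

theorem algebraGaussSum_pi [DecidableEq ι] [∀ i, Fintype (A i)] (μ : MulChar Z C)
    (χ : AddChar Z C) :
    algebraGaussSum (∀ i, A i) μ χ = ∏ i, algebraGaussSum (A i) μ χ := by
  simp only [algebraGaussSum, norm_pi_apply, trace_pi_apply, map_prod, addChar_sum,
    prod_univ_sum, prod_mul_distrib, Fintype.piFinset_univ]

end Pi

end AlgebraGaussSum

section HasseDavenport

open Polynomial

variable {F E C : Type*} [Field F] [Field E] [Algebra F E] [CommRing C]

theorem natDegree_minpoly_mul_finrank_adjoin [Algebra.IsIntegral F E] (α : E) :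
    (minpoly F α).natDegree * Module.finrank (IntermediateField.adjoin F {α}) E =
      Module.finrank F E := by
  rw [← IntermediateField.adjoin.finrank (Algebra.IsIntegral.isIntegral α)]
  exact Module.finrank_mul_finrank _ _ _

theorem monicWeight_minpoly_pow [FiniteDimensional F E] [Algebra.IsSeparable F E]
    (μ : MulChar F C) (χ : AddChar F C) (α : E) :
    monicWeight μ χ (minpoly F α) ^ Module.finrank (IntermediateField.adjoin F {α}) E =
      μ (Algebra.norm F α) * χ (Algebra.trace F E α) := by
  have hint : IsIntegral F α := Algebra.IsIntegral.isIntegral α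
  have hnorm := Algebra.PowerBasis.norm_gen_eq_coeff_zero_minpoly
    (IntermediateField.adjoin.powerBasis hint)
  have htrace := PowerBasis.trace_gen_eq_nextCoeff_minpoly
    (IntermediateField.adjoin.powerBasis hint)
  rw [IntermediateField.adjoin.powerBasis_gen, IntermediateField.minpoly_gen] at hnorm htrace
  rw [IntermediateField.adjoin.powerBasis_dim] at hnorm
  rw [Algebra.norm_eq_norm_adjoin F α, trace_eq_trace_adjoin F α, hnorm, htrace,
    AddChar.map_nsmul_eq_pow, map_pow, ← mul_pow, monicWeight]

theorem splits_map_of_natDegree_dvd_finrank [Finite F] [Finite E] {P : F[X]} (hirr : Irreducible P)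
    (hdvd : P.natDegree ∣ Module.finrank F E) : (P.map (algebraMap F E)).Splits := by
  have := Fintype.ofFinite F
  have := Fintype.ofFinite E
  have hdvd' := hirr.natDegree_dvd_iff_dvd_X_pow_card_pow_sub_X.mp hdvd
  rw [← Module.natCard_eq_pow_finrank (K := F) (V := E), Nat.card_eq_fintype_card] at hdvd'
  exact (FiniteField.isSplittingField_sub E F).splits.of_dvd
    (map_ne_zero (FiniteField.X_pow_card_sub_X_ne_zero _ Fintype.one_lt_card))
    (Polynomial.map_dvd (algebraMap F E) hdvd')

variable [Fintype E]

open scoped Classical in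
theorem card_filter_minpoly_eq [Finite F] {P : F[X]} (hP : P.Monic) (hirr : Irreducible P)
    (hdvd : P.natDegree ∣ Module.finrank F E) :
    #{α : E | minpoly F α = P} = P.natDegree := by
  rw [← card_rootSet_eq_natDegree (PerfectField.separable_of_irreducible hirr)
    (splits_map_of_natDegree_dvd_finrank (E := E) hirr hdvd), ← Set.toFinset_card]
  congr 1
  ext α
  simp only [mem_filter, mem_univ, true_and, Set.mem_toFinset, mem_rootSet]
  constructor
  · rintro rfl
    exact ⟨hirr.ne_zero, minpoly.aeval F α⟩
  · rintro ⟨-, hroot⟩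
    exact (minpoly.eq_of_irreducible_of_monic hirr hroot hP).symm

/-- An element `α` of `E` contributes to the prime power `minpoly F α ^ [E : F(α)]`, the
characteristic polynomial of `α` over `F`. -/
theorem algebraGaussSum_eq_primePowerSum [Finite F] (μ : MulChar F C) (χ : AddChar F C) :
    algebraGaussSum E μ χ = primePowerSum μ χ (Module.finrank F E) := by
  classical
  let charpolyPair (α : E) : F[X] × ℕ :=
    (minpoly F α, Module.finrank (IntermediateField.adjoin F {α}) E)
  have hmaps : ∀ α ∈ (univ : Finset E),
      charpolyPair α ∈ primePowersOfDegree F (Module.finrank F E) := fun α _ => by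
    have hint : IsIntegral F α := Algebra.IsIntegral.isIntegral α
    rw [mem_primePowersOfDegree, mul_comm]
    exact ⟨minpoly.monic hint, minpoly.irreducible hint, Module.finrank_pos,
      natDegree_minpoly_mul_finrank_adjoin α⟩
  rw [algebraGaussSum, ← sum_fiberwise_of_maps_to hmaps, primePowerSum]
  refine sum_congr rfl fun ⟨P, j⟩ hx => ?_
  obtain ⟨hP, hirr, -, hdeg⟩ := mem_primePowersOfDegree.mp hx
  have hfiber (α : E) : charpolyPair α = (P, j) ↔ minpoly F α = P := by
    refine ⟨fun h => congrArg Prod.fst h, fun h => Prod.ext h ?_⟩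
    have hmul := natDegree_minpoly_mul_finrank_adjoin (F := F) α
    rw [h, ← hdeg, mul_comm] at hmul
    exact Nat.eq_of_mul_eq_mul_right hirr.natDegree_pos hmul
  have hvalue : ∀ α ∈ ({α : E | charpolyPair α = (P, j)} : Finset E),
      μ (Algebra.norm F α) * χ (Algebra.trace F E α) = monicWeight μ χ P ^ j := fun α hα => by
    obtain ⟨rfl, rfl⟩ := Prod.ext_iff.mp (mem_filter.mp hα).2
    exact (monicWeight_minpoly_pow μ χ α).symm
  rw [sum_congr rfl hvalue, sum_const, nsmul_eq_mul, filter_congr fun α _ => hfiber α,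
    card_filter_minpoly_eq hP hirr (Dvd.intro_left j hdeg)]

/-- The Hasse–Davenport relation. -/
theorem algebraGaussSum_eq_neg_one_pow_mul [Fintype F] [IsDomain C] (μ : MulChar F C)
    {χ : AddChar F C} (hχ : χ ≠ 1) :
    algebraGaussSum E μ χ =
      (-1) ^ (Module.finrank F E - 1) * gaussSum μ χ ^ Module.finrank F E := by
  obtain ⟨n, hn⟩ := Nat.exists_eq_add_one_of_ne_zero (Module.finrank_pos (R := F) (M := E)).ne'
  rw [algebraGaussSum_eq_primePowerSum, hn, primePowerSum_succ μ hχ, Nat.add_sub_cancel]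

theorem exists_algebraGaussSum_eq_of_isReduced [Fintype F] [IsDomain C] (A : Type*) [CommRing A]
    [Algebra F A] [Fintype A] [IsReduced A] :
    ∃ k : ℕ, ∀ (μ : MulChar F C) (χ : AddChar F C), χ ≠ 1 →
      algebraGaussSum A μ χ = (-1) ^ k * gaussSum μ χ ^ Module.finrank F A := by
  classical
  have : Fintype (MaximalSpectrum A) := Fintype.ofFinite _
  let (I : MaximalSpectrum A) : Field (A ⧸ I.asIdeal) := Ideal.Quotient.field I.asIdeal
  let (I : MaximalSpectrum A) : Fintype (A ⧸ I.asIdeal) := Fintype.ofFinite _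
  let e : A ≃ₐ[F] ∀ I : MaximalSpectrum A, A ⧸ I.asIdeal :=
    (IsArtinianRing.equivPi A).restrictScalars F
  refine ⟨∑ I : MaximalSpectrum A, (Module.finrank F (A ⧸ I.asIdeal) - 1), fun μ χ hχ => ?_⟩
  rw [algebraGaussSum_congr e, algebraGaussSum_pi, e.toLinearEquiv.finrank_eq,
    Module.finrank_pi_fintype, ← prod_pow_eq_pow_sum, ← prod_pow_eq_pow_sum, ← prod_mul_distrib]
  exact prod_congr rfl fun I _ => algebraGaussSum_eq_neg_one_pow_mul μ hχ

end HasseDavenport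

section TruncatedExponential

open Polynomial

theorem map_charpolyRev {Z S ι : Type*} [CommRing Z] [CommRing S] [Fintype ι]
    [DecidableEq ι] (f : Z[X] →+* S) (M : Matrix ι ι Z) :
    f M.charpolyRev = (1 - f X • M.map (f.comp C)).det := by
  rw [Matrix.charpolyRev, RingHom.map_det]
  congr 1
  ext i j : 1
  rcases eq_or_ne i j with rfl | h <;> simp [*, mul_comm (f X)]

theorem charpolyRev_mul_comp_neg_X {Z ι : Type*} [CommRing Z] [Fintype ι] [DecidableEq ι]
    (M : Matrix ι ι Z) :
    M.charpolyRev * M.charpolyRev.comp (-X) = expand Z 2 (M * M).charpolyRev := by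
  have hneg := map_charpolyRev (compRingHom (-X : Z[X])) M
  have hexp := map_charpolyRev (expand Z 2 : Z[X] →+* Z[X]) (M * M)
  have hC : (compRingHom (-X : Z[X])).comp C = C := by ext; simp
  have hC' : (expand Z 2 : Z[X] →+* Z[X]).comp C = C := by ext; simp
  rw [hC, coe_compRingHom_apply, coe_compRingHom_apply, X_comp] at hneg
  rw [hC', RingHom.coe_coe, expand_X] at hexp
  rw [hneg, hexp, Matrix.charpolyRev, ← Matrix.det_mul, Matrix.map_mul]
  congr 1
  rw [neg_smul, sub_neg_eq_add, sub_mul, mul_add, mul_add, smul_mul_smul_comm, sq]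
  simp only [one_mul, mul_one]
  abel

theorem two_mul_coeff_two_charpolyRev {Z ι : Type*} [CommRing Z] [Fintype ι] [DecidableEq ι]
    (M : Matrix ι ι Z) : 2 * M.charpolyRev.coeff 2 = M.trace ^ 2 - (M * M).trace := by
  have h := congrArg (coeff · 2) (charpolyRev_mul_comp_neg_X M)
  have h0 : M.charpolyRev.coeff 0 = 1 := by rw [coeff_zero_eq_eval_zero, Matrix.eval_charpolyRev]
  have h1 : (expand Z 2 (M * M).charpolyRev).coeff 2 = (M * M).charpolyRev.coeff 1 :=
    coeff_expand_mul two_pos _ 1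
  have hcoeff (i : ℕ) : (M.charpolyRev.comp (-X)).coeff i = M.charpolyRev.coeff i * (-1) ^ i := by
    rw [show (-X : Z[X]) = C (-1) * X by simp, comp_C_mul_X_coeff]
  simp only [coeff_mul, Nat.sum_antidiagonal_eq_sum_range_succ_mk, sum_range_succ, range_zero,
    sum_empty, hcoeff, h1, h0, Nat.sub_zero, Nat.reduceSub,
    Matrix.coeff_charpolyRev_eq_neg_trace] at h
  linear_combination h

theorem det_one_add_smul_of_pow_three_eq_zero {Z ι : Type*} [CommRing Z] [Fintype ι]
    [DecidableEq ι] [Invertible (2 : Z)] {r : Z} (hr : r ^ 3 = 0) (M : Matrix ι ι Z) :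
    (1 + r • M).det = 1 + r * M.trace + ⅟2 * r ^ 2 * (M.trace ^ 2 - (M * M).trace) := by
  have heval := map_charpolyRev (evalRingHom (-r)) M
  have hC : (evalRingHom (-r)).comp C = RingHom.id Z := by ext; simp
  rw [hC, coe_evalRingHom, eval_X, RingHom.coe_id, Matrix.map_id, neg_smul, sub_neg_eq_add] at heval
  have h0 : M.charpolyRev.coeff 0 = 1 := by rw [coeff_zero_eq_eval_zero, Matrix.eval_charpolyRev]
  have hdivX : M.charpolyRev = X * (X * (X * M.charpolyRev.divX.divX.divX +
      C (M.charpolyRev.coeff 2)) + C (-M.trace)) + C 1 := by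
    conv_lhs => rw [← X_mul_divX_add M.charpolyRev, ← X_mul_divX_add M.charpolyRev.divX,
      ← X_mul_divX_add M.charpolyRev.divX.divX]
    simp only [coeff_divX, zero_add, Nat.reduceAdd, Matrix.coeff_charpolyRev_eq_neg_trace, h0]
  rw [← heval, ← two_mul_coeff_two_charpolyRev, congrArg (eval (-r)) hdivX]
  simp only [eval_add, eval_mul, eval_X, eval_C]
  linear_combination (-eval (-r) M.charpolyRev.divX.divX.divX) * hr -
    r ^ 2 * M.charpolyRev.coeff 2 * invOf_mul_self (2 : Z)

variable {Z R : Type*} [CommRing Z] [CommRing R] [Algebra Z R] [Invertible (2 : Z)]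

theorem two_mul_algebraMap_invOf_two : 2 * algebraMap Z R ⅟2 = 1 := by
  rw [← map_ofNat (algebraMap Z R) 2, ← map_mul, mul_invOf_self, map_one]

theorem norm_one_add_smul_of_pow_three_eq_zero [Module.Free Z R] [Module.Finite Z R] {r : Z}
    (hr : r ^ 3 = 0) (x : R) :
    Algebra.norm Z (1 + r • x) = 1 + r * Algebra.trace Z R x +
      ⅟2 * r ^ 2 * (Algebra.trace Z R x ^ 2 - Algebra.trace Z R (x * x)) := by
  classical
  let b := Module.Free.chooseBasis Z R
  simp only [Algebra.norm_eq_matrix_det b, Algebra.trace_eq_matrix_trace b, map_add, map_one,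
    map_smul, map_mul, det_one_add_smul_of_pow_three_eq_zero hr]

variable (Z) in
/-- The exponential series truncated after the quadratic term. It is a homomorphism on ideals of
cube zero; the coefficient `⅟2` is taken in the base ring `Z`. -/
def quadExp (x : R) : R := 1 + x + (⅟2 : Z) • x ^ 2

theorem quadExp_zero : quadExp Z (0 : R) = 1 := by
  simp [quadExp]

theorem quadExp_of_sq_eq_zero {x : R} (hx : x ^ 2 = 0) : quadExp Z x = 1 + x := by
  rw [quadExp, hx, smul_zero, add_zero]

theorem quadExp_add {x y : R} (hxy : x ^ 2 * y = 0) (hyx : x * y ^ 2 = 0) :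
    quadExp Z (x + y) = quadExp Z x * quadExp Z y := by
  simp only [quadExp, Algebra.smul_def]
  have h2 := two_mul_algebraMap_invOf_two (Z := Z) (R := R)
  linear_combination (x * y) * h2 -
    (algebraMap Z R ⅟2 + (algebraMap Z R ⅟2) ^ 2 * y) * hxy - algebraMap Z R ⅟2 * hyx

theorem quadExp_sub_half_sq {x : R} (hx : x ^ 3 = 0) :
    quadExp Z (x - (⅟2 : Z) • x ^ 2) = 1 + x := by
  simp only [quadExp, Algebra.smul_def]
  set k := algebraMap Z R ⅟2
  linear_combination (k ^ 3 * x - 2 * k ^ 2) * hx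

theorem quadExp_inj_of_isNilpotent {x y : R} (hx : IsNilpotent x) (hy : IsNilpotent y) :
    quadExp Z x = quadExp Z y ↔ x = y := by
  refine ⟨fun h => ?_, fun h => h ▸ rfl⟩
  have hunit : IsUnit (1 + (⅟2 : Z) • (x + y)) :=
    ((Commute.all x y).isNilpotent_add hx hy).smul _ |>.isUnit_one_add
  refine sub_eq_zero.mp (hunit.mul_left_eq_zero.mp ?_)
  simp only [quadExp, Algebra.smul_def] at h ⊢
  linear_combination h

theorem norm_quadExp_smul [Module.Free Z R] [Module.Finite Z R] {r : Z} (hr : r ^ 3 = 0) (y : R) :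
    Algebra.norm Z (quadExp Z (r • y)) = quadExp Z (r * Algebra.trace Z R y) := by
  have hfactor : quadExp Z (r • y) = 1 + r • (y + (r * ⅟2) • (y * y)) := by
    simp only [quadExp, Algebra.smul_def, map_mul]
    ring
  have hsq : (y + (r * ⅟2) • (y * y)) * (y + (r * ⅟2) • (y * y)) =
      y * y + r • ((2 * ⅟2 : Z) • (y * y * y) + (r * ⅟2 ^ 2) • (y * y * (y * y))) := by
    simp only [Algebra.smul_def, map_mul, map_pow, map_ofNat]
    ring
  rw [hfactor, norm_one_add_smul_of_pow_three_eq_zero hr, hsq]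
  simp only [map_add, map_smul, smul_eq_mul, quadExp]
  generalize Algebra.trace Z R y = t₁
  generalize Algebra.trace Z R (y * y) = t₂
  generalize Algebra.trace Z R (y * y * y) = t₃
  generalize Algebra.trace Z R (y * y * (y * y)) = t₄
  linear_combination (2 * ⅟2 ^ 2 * t₁ * t₂ + r * ⅟2 ^ 3 * t₂ ^ 2 - 2 * ⅟2 ^ 2 * t₃ -
    r * ⅟2 ^ 3 * t₄) * hr

end TruncatedExponential

section StationaryPhase

theorem sum_comp_addMonoidHom {A B S : Type*} [AddCommGroup A] [AddCommGroup B] [Fintype A]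
    [Fintype B] [DecidableEq B] [Semiring S] (φ : A →+ B) (g : B → S) :
    ∑ a, g (φ a) = #{a | φ a = 0} * ∑ b with b ∈ Set.range φ, g b := by
  rw [← sum_fiberwise_of_maps_to (t := {b | b ∈ Set.range φ}) (g := φ) (by simp), mul_sum]
  refine sum_congr rfl fun b hb => ?_
  rw [sum_congr rfl fun a ha => by rw [(mem_filter.mp ha).2], sum_const, nsmul_eq_mul,
    AddMonoidHom.card_fiber_eq_of_mem_range φ (mem_filter.mp hb).2 ⟨0, map_zero φ⟩]

variable {Z R S : Type*} [CommRing Z] [CommRing R] [Algebra Z R] [Fintype R] [DecidableEq R]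
  [CommRing S] [Module.Free Z R] [Module.Finite Z R]

theorem algebraGaussSum_eq_sum_filter [IsDomain S] [CharZero S] {s c : Z} (hs : s ^ 2 = 0)
    {μ : MulChar Z S} {χ : AddChar Z S} (hμ : ∀ t, μ (1 + s * t) = χ (s * (c * t)))
    (hχ : (χ.compAddMonoidHom (Algebra.trace Z R).toAddMonoidHom).IsPrimitive) :
    algebraGaussSum R μ χ = ∑ α : R with s • (algebraMap Z R c + α) = 0,
      μ (Algebra.norm Z α) * χ (Algebra.trace Z R α) := by
  set f : R → S := fun α => μ (Algebra.norm Z α) * χ (Algebra.trace Z R α)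
  have hnorm (y : R) : Algebra.norm Z (1 + s • y) = 1 + s * Algebra.trace Z R y := by
    obtain ⟨w, hw⟩ := Algebra.norm_one_add_smul s y
    linear_combination hw + w * hs
  have hshift (y α : R) : f (α * (1 + s • y)) =
      f α * χ (Algebra.trace Z R (y * (s • (algebraMap Z R c + α)))) := by
    have hα : α * (1 + s • y) = α + s • (α * y) := by rw [mul_add, mul_one, mul_smul_comm]
    have hy : y * (s • (algebraMap Z R c + α)) = s • c • y + s • (α * y) := by
      simp only [Algebra.smul_def]
      ring
    simp only [f]
    rw [map_mul, hnorm, map_mul, hμ, hα, hy]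
    simp only [map_add, map_smul, smul_eq_mul, AddChar.map_add_eq_mul]
    ring
  have hinv (y : R) : ∑ α, f (α * (1 + s • y)) = ∑ α, f α := by
    have hunit : IsUnit (1 + s • y) :=
      IsNilpotent.isUnit_one_add ⟨2, by rw [smul_pow, hs, zero_smul]⟩
    exact Fintype.sum_equiv hunit.unit.mulRight _ _ fun _ => rfl
  refine mul_left_cancel₀ (Nat.cast_ne_zero.mpr (Fintype.card_ne_zero (α := R))) ?_
  calc (Fintype.card R : S) * ∑ α, f α
      = ∑ y : R, ∑ α, f (α * (1 + s • y)) := by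
        simp only [hinv, sum_const, card_univ, nsmul_eq_mul]
    _ = ∑ α, f α * ∑ y : R, χ (Algebra.trace Z R (y * (s • (algebraMap Z R c + α)))) := by
        rw [sum_comm]
        simp only [hshift, mul_sum]
    _ = ∑ α, f α * if s • (algebraMap Z R c + α) = 0 then (Fintype.card R : S) else 0 :=
        sum_congr rfl fun α _ => congrArg (f α * ·) <| by
          simpa using AddChar.sum_mulShift (s • (algebraMap Z R c + α)) hχ
    _ = Fintype.card R * ∑ α : R with s • (algebraMap Z R c + α) = 0, f α := by
        rw [sum_filter, mul_sum]
        refine sum_congr rfl fun α _ => ?_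
        split_ifs <;> ring

variable [Invertible (2 : Z)] {r s c : Z}

omit [Fintype R] [DecidableEq R] [Module.Free Z R] [Module.Finite Z R] in
theorem bijOn_neg_smul_quadExp (hrs : r * s = 0) (hr : r ^ 3 = 0) (hc : IsUnit c)
    (hann : ∀ x : R, s • x = 0 → ∃ w, x = r • w) :
    Set.BijOn (fun x : R => -c • quadExp Z x) (Set.range (r • ·))
      {α | s • (algebraMap Z R c + α) = 0} := by
  obtain ⟨u, rfl⟩ := hc
  refine ⟨?_, ?_, fun α hα => ?_⟩
  · rintro _ ⟨z, rfl⟩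
    have hrs' : algebraMap Z R r * algebraMap Z R s = 0 := by rw [← map_mul, hrs, map_zero]
    simp only [quadExp, Set.mem_ofPred_eq, Algebra.smul_def, map_neg]
    linear_combination
      (-algebraMap Z R u * (z + algebraMap Z R ⅟2 * algebraMap Z R r * z ^ 2)) * hrs'
  · rintro _ ⟨y, rfl⟩ _ ⟨z, rfl⟩ h
    have hnil (z : R) : IsNilpotent (r • z) := ⟨3, by rw [smul_pow, hr, zero_smul]⟩
    rw [← quadExp_inj_of_isNilpotent (Z := Z) (hnil y) (hnil z)]
    exact (-u).isUnit.smul_left_cancel.mp h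
  · obtain ⟨w, hw⟩ := hann _ hα
    set y : R := r • (-(u⁻¹ : Zˣ) : Z) • w
    have hy : y ^ 3 = 0 := by rw [smul_pow, hr, zero_smul]
    refine ⟨y - (⅟2 : Z) • y ^ 2, ⟨(-(u⁻¹ : Zˣ) : Z) • w - (⅟2 * r) •
      ((-(u⁻¹ : Zˣ) : Z) • w) ^ 2, ?_⟩, ?_⟩
    · simp only [y, smul_sub, smul_smul, smul_pow]
      congr 2
      ring
    · have huw : (u : Z) • y = -(algebraMap Z R u + α) := by
        rw [hw, smul_smul, smul_smul, ← neg_smul]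
        congr 1
        linear_combination (-r) * u.mul_inv
      simp only [quadExp_sub_half_sq hy, smul_add, neg_smul, huw, ← Algebra.algebraMap_eq_smul_one,
        map_neg]
      ring

omit [Fintype R] [DecidableEq R] in
theorem mulChar_norm_mul_addChar_trace_neg_smul_quadExp [Nontrivial Z] (hr : r ^ 3 = 0)
    {μ : MulChar Z S} {χ : AddChar Z S} (hμ : ∀ t, μ (quadExp Z (r * t)) = χ (c * (r * t)))
    (z : R) :
    μ (Algebra.norm Z (-c • quadExp Z (r • z))) * χ (Algebra.trace Z R (-c • quadExp Z (r • z))) =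
      (μ (-c) * χ (-c)) ^ Module.finrank Z R *
        χ (r ^ 2 * (-c * ⅟2 * Algebra.trace Z R (z * z))) := by
  have hnorm : Algebra.norm Z (-c • quadExp Z (r • z)) =
      (-c) ^ Module.finrank Z R * quadExp Z (r * Algebra.trace Z R z) := by
    rw [Algebra.smul_def, map_mul, norm_quadExp_smul hr, Algebra.norm_algebraMap]
  have htrace : Algebra.trace Z R (-c • quadExp Z (r • z)) = Module.finrank Z R • (-c) +
      -(c * (r * Algebra.trace Z R z)) + r ^ 2 * (-c * ⅟2 * Algebra.trace Z R (z * z)) := by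
    have hone : Algebra.trace Z R (1 : R) = Module.finrank Z R := by
      simpa using Algebra.trace_algebraMap (S := R) (1 : Z)
    simp only [quadExp, map_add, map_smul, smul_eq_mul, hone, nsmul_eq_mul, smul_pow, ← sq]
    ring
  have hcancel : χ (c * (r * Algebra.trace Z R z)) * χ (-(c * (r * Algebra.trace Z R z))) = 1 := by
    rw [← AddChar.map_add_eq_mul, add_neg_cancel, AddChar.map_zero_eq_one]
  rw [hnorm, htrace, map_mul, map_pow, hμ, AddChar.map_add_eq_mul, AddChar.map_add_eq_mul,
    AddChar.map_nsmul_eq_pow, mul_pow]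
  linear_combination ((μ (-c)) ^ Module.finrank Z R * (χ (-c)) ^ Module.finrank Z R *
    χ (r ^ 2 * (-c * ⅟2 * Algebra.trace Z R (z * z)))) * hcancel

theorem card_mul_algebraGaussSum_eq_sum_quadratic [Nontrivial Z] [IsDomain S] [CharZero S]
    (hrs : r * s = 0) (hdvd : r ∣ s) (hdvd' : s ∣ r ^ 2) (hc : IsUnit c)
    {μ : MulChar Z S} {χ : AddChar Z S} (hμ : ∀ t, μ (quadExp Z (r * t)) = χ (c * (r * t)))
    (hχ : (χ.compAddMonoidHom (Algebra.trace Z R).toAddMonoidHom).IsPrimitive)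
    (hann : ∀ x : R, s • x = 0 → ∃ w, x = r • w) :
    #{z : R | r • z = 0} * algebraGaussSum R μ χ =
      (μ (-c) * χ (-c)) ^ Module.finrank Z R *
        ∑ z : R, χ (r ^ 2 * (-c * ⅟2 * Algebra.trace Z R (z * z))) := by
  obtain ⟨u, rfl⟩ := hdvd
  obtain ⟨v, hv⟩ := hdvd'
  have hr : r ^ 3 = 0 := by linear_combination r * hv + v * hrs
  have hs : (r * u) ^ 2 = 0 := by linear_combination u * hrs
  have hμs (t : Z) : μ (1 + r * u * t) = χ (r * u * (c * t)) := by
    have hsq : (r * (u * t)) ^ 2 = 0 := by linear_combination t ^ 2 * hs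
    rw [mul_assoc, ← quadExp_of_sq_eq_zero (Z := Z) hsq, hμ]
    congr 1
    ring
  have hbij := bijOn_neg_smul_quadExp hrs hr hc hann
  rw [algebraGaussSum_eq_sum_filter hs hμs hχ, mul_sum univ]
  simp only [← mulChar_norm_mul_addChar_trace_neg_smul_quadExp hr hμ]
  have hfiber := sum_comp_addMonoidHom (DistribSMul.toAddMonoidHom R r) fun x =>
    μ (Algebra.norm Z (-c • quadExp Z x)) * χ (Algebra.trace Z R (-c • quadExp Z x))
  simp only [DistribSMul.toAddMonoidHom_apply] at hfiber
  rw [hfiber]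
  congr 1
  symm
  refine sum_bij (fun x _ => -c • quadExp Z x) ?_ ?_ ?_ fun _ _ => rfl
  · exact fun x hx => mem_filter.mpr ⟨mem_univ _, hbij.mapsTo (mem_filter.mp hx).2⟩
  · exact fun x hx y hy h => hbij.injOn (mem_filter.mp hx).2 (mem_filter.mp hy).2 h
  · intro α hα
    obtain ⟨x, hx, rfl⟩ := hbij.surjOn (mem_filter.mp hα).2
    exact ⟨x, mem_filter.mpr ⟨mem_univ _, hx⟩, rfl⟩

end StationaryPhase

section QuadraticGaussSum

variable {F S : Type*} [Field F] [Fintype F] [CommRing S] [IsDomain S]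

theorem sum_addChar_sq_eq_gaussSum [DecidableEq F] (hF : ringChar F ≠ 2) {χ : AddChar F S}
    (hχ : χ ≠ 1) :
    ∑ t, χ (t ^ 2) = gaussSum ((quadraticChar F).ringHomComp (Int.castRingHom S)) χ := by
  have hcard (s : F) : (#{t : F | t ^ 2 = s} : S) = quadraticChar F s + 1 := by
    rw [← Int.cast_one, ← Int.cast_add, ← quadraticChar_card_sqrts hF, Int.cast_natCast]
    congr 2
    ext t
    simp
  calc ∑ t, χ (t ^ 2)
      = ∑ s, ∑ t with t ^ 2 = s, χ (t ^ 2) := (sum_fiberwise _ _ _).symm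
    _ = ∑ s, (quadraticChar F s + 1) * χ s := sum_congr rfl fun s _ => by
        rw [sum_congr rfl fun t ht => by rw [(mem_filter.mp ht).2], sum_const, nsmul_eq_mul, hcard]
    _ = ∑ s, quadraticChar F s * χ s + ∑ s, χ s := by
        simp only [add_mul, one_mul, sum_add_distrib]
    _ = _ := by
        rw [AddChar.sum_eq_zero_of_ne_one hχ, add_zero]
        rfl

theorem sum_addChar_mul_sq [DecidableEq F] (hF : ringChar F ≠ 2) {χ : AddChar F S} (hχ : χ ≠ 1)
    (w : Fˣ) : ∑ t, χ (w * t ^ 2) = quadraticChar F w * ∑ t, χ (t ^ 2) := by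
  have hshift : χ.mulShift w ≠ 1 := (χ.mulShift_unit_eq_one_iff w.isUnit).not.mpr hχ
  have h := gaussSum_mulShift ((quadraticChar F).ringHomComp (Int.castRingHom S)) χ w
  have hw : (quadraticChar F w : S) * quadraticChar F w = 1 := by
    rw [← Int.cast_mul, ← sq, quadraticChar_sq_one w.ne_zero, Int.cast_one]
  rw [← sum_addChar_sq_eq_gaussSum hF hχ, ← sum_addChar_sq_eq_gaussSum hF hshift] at h
  simp only [AddChar.mulShift_apply, MulChar.ringHomComp_apply, eq_intCast] at h
  rw [← h, ← mul_assoc, hw, one_mul]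

variable [CharZero S]

theorem exists_sum_quadraticForm_eq [Invertible (2 : F)] (hF : ringChar F ≠ 2) {V : Type*}
    [AddCommGroup V] [Module F V] [Fintype V] {Q : QuadraticForm F V}
    (hQ : (QuadraticMap.associated (R := F) Q).SeparatingLeft) :
    ∃ D : S, D ≠ 0 ∧ ∀ χ : AddChar F S, χ ≠ 1 →
      ∑ v, χ (Q v) = D * (∑ t, χ (t ^ 2)) ^ Module.finrank F V := by
  classical
  obtain ⟨w, ⟨f⟩⟩ := QuadraticForm.equivalent_weightedSumSquares_units_of_nondegenerate' Q hQ
  refine ⟨∏ i, (quadraticChar F (w i) : S), prod_ne_zero_iff.mpr fun i _ => ?_, fun χ hχ => ?_⟩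
  · rw [Int.cast_ne_zero, Ne, quadraticChar_eq_zero_iff]
    exact (w i).ne_zero
  · calc ∑ v, χ (Q v)
        = ∑ x : Fin (Module.finrank F V) → F, ∏ i, χ (w i * x i ^ 2) := by
          refine Fintype.sum_equiv f.toEquiv _ _ fun v => ?_
          rw [← f.map_app v, QuadraticMap.weightedSumSquares_apply, addChar_sum]
          simp [Units.smul_def, sq]
      _ = ∏ i, ∑ t, χ (w i * t ^ 2) :=
          (Fintype.prod_sum fun i t => χ (w i * t ^ 2)).symm
      _ = _ := by
          simp only [sum_addChar_mul_sq hF hχ, prod_mul_distrib, prod_const, card_univ,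
            Fintype.card_fin]

theorem exists_sum_dotProduct_mulVec_eq (hF : ringChar F ≠ 2) {ι : Type*} [Fintype ι]
    [DecidableEq ι] {B : Matrix ι ι F} (hB : B.IsSymm) (hdet : B.det ≠ 0) :
    ∃ D : S, D ≠ 0 ∧ ∀ χ : AddChar F S, χ ≠ 1 →
      ∑ v : ι → F, χ (v ⬝ᵥ B.mulVec v) = D * (∑ t, χ (t ^ 2)) ^ Fintype.card ι := by
  have : Invertible (2 : F) := invertibleOfNonzero (Ring.two_ne_zero hF)
  set Q : QuadraticForm F (ι → F) :=
    LinearMap.BilinMap.toQuadraticMap (Matrix.toLinearMap₂' F B)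
  have hQ : (QuadraticMap.associated (R := F) Q).SeparatingLeft := by
    rw [QuadraticMap.associated_left_inverse]
    · exact LinearMap.separatingLeft_toLinearMap₂'_of_det_ne_zero' hdet
    · intro x y
      rw [Matrix.toLinearMap₂'_apply', Matrix.toLinearMap₂'_apply', Matrix.dotProduct_mulVec,
        ← Matrix.mulVec_transpose, hB.eq, dotProduct_comm]
  simpa only [Q, LinearMap.BilinMap.toQuadraticMap_apply, Matrix.toLinearMap₂'_apply',
    Module.finrank_fintype_fun_eq_card] using exists_sum_quadraticForm_eq (S := S) hF hQ

end QuadraticGaussSum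

theorem exists_sum_comp_eq_mul_sum {A B S : Type*} [AddCommGroup A] [AddCommGroup B] [Fintype A]
    [Fintype B] [Semiring S] [CharZero S] {φ : A →+ B} (hφ : Function.Surjective φ) :
    ∃ κ : S, κ ≠ 0 ∧ ∀ g : B → S, ∑ a, g (φ a) = κ * ∑ b, g b := by
  classical
  refine ⟨#{a | φ a = 0}, Nat.cast_ne_zero.mpr (card_ne_zero.mpr ⟨0, by simp⟩), fun g => ?_⟩
  simp only [sum_comp_addMonoidHom, hφ.range_eq, Set.mem_univ, filter_true]

section TraceForm

variable {Z R ι : Type*} [CommRing Z] [CommRing R] [Algebra Z R] [Fintype ι]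

theorem trace_sq_eq_dotProduct (b : Module.Basis ι Z R) (z : R) :
    Algebra.trace Z R (z ^ 2) = b.repr z ⬝ᵥ (Algebra.traceMatrix Z b).mulVec (b.repr z) := by
  conv_lhs => rw [sq, ← b.sum_repr z, sum_mul_sum, map_sum]
  simp only [map_sum, smul_mul_smul_comm, map_smul, smul_eq_mul, dotProduct, Matrix.mulVec,
    Algebra.traceMatrix_apply, Algebra.traceForm_apply, mul_sum]
  exact sum_congr rfl fun i _ => sum_congr rfl fun j _ => by ring

variable [DecidableEq ι] {b : Module.Basis ι Z R}

theorem traceForm_nondegenerate_of_isUnit_discr (hb : IsUnit (Algebra.discr Z b)) :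
    (Algebra.traceForm Z R).Nondegenerate := by
  have hmat : LinearMap.BilinForm.toMatrix b (Algebra.traceForm Z R) = Algebra.traceMatrix Z b :=
    Matrix.ext fun i j => LinearMap.BilinForm.toMatrix_apply b _ i j
  rw [← LinearMap.BilinForm.nondegenerate_toMatrix_iff b, hmat]
  exact .of_det_mem_nonZeroDivisors (Algebra.discr_def Z b ▸ hb.mem_nonZeroDivisors)

theorem traceForm_self_nondegenerate : (Algebra.traceForm Z Z).Nondegenerate :=
  traceForm_nondegenerate_of_isUnit_discr (b := Module.Basis.singleton Unit Z) <| by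
    simp [Algebra.discr_def, Algebra.traceMatrix_apply]

theorem exists_sum_addChar_trace_sq_eq {F S : Type*} [Field F] [Finite F] [Field S] [CharZero S]
    [Fintype Z] [Fintype R] (hF : ringChar F ≠ 2) (hb : IsUnit (Algebra.discr Z b)) {π : Z →+* F}
    (hπ : Function.Surjective π) :
    ∃ D : S, D ≠ 0 ∧ ∀ χ : AddChar F S, χ ≠ 1 → ∑ z : R, χ (π (Algebra.trace Z R (z ^ 2))) =
      D * (∑ t : Z, χ (π (t ^ 2))) ^ Fintype.card ι := by
  classical
  have := Fintype.ofFinite F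
  let B : Matrix ι ι F := (Algebra.traceMatrix Z b).map π
  have hB : B.IsSymm := by
    ext i j
    simp only [B, Matrix.transpose_apply, Matrix.map_apply, Algebra.traceMatrix_apply,
      Algebra.traceForm_apply, mul_comm]
  have hdet : B.det ≠ 0 := (π.map_det (Algebra.traceMatrix Z b) ▸ hb.map π).ne_zero
  obtain ⟨D, hD, hsum⟩ := exists_sum_dotProduct_mulVec_eq (S := S) hF hB hdet
  let φ : R →+ (ι → F) := (π.toAddMonoidHom.compLeft ι).comp b.equivFun.toAddMonoidHom
  have hφ : Function.Surjective φ := hπ.comp_left.comp b.equivFun.surjective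
  have hφtrace (z : R) : π (Algebra.trace Z R (z ^ 2)) = φ z ⬝ᵥ B.mulVec (φ z) := by
    rw [trace_sq_eq_dotProduct b, RingHom.map_dotProduct]
    congr 1
    exact funext fun i => RingHom.map_mulVec π _ _ i
  obtain ⟨κ, hκ, hsumφ⟩ := exists_sum_comp_eq_mul_sum (S := S) hφ
  obtain ⟨κ', hκ', hsumπ⟩ := exists_sum_comp_eq_mul_sum (S := S) (φ := π.toAddMonoidHom) hπ
  refine ⟨κ * D / κ' ^ Fintype.card ι, by positivity, fun χ hχ => ?_⟩
  have hR : ∑ z : R, χ (π (Algebra.trace Z R (z ^ 2))) =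
      κ * (D * (∑ t, χ (t ^ 2)) ^ Fintype.card ι) := by
    rw [← hsum χ hχ, ← hsumφ]
    simp only [hφtrace]
  have hZ : ∑ t : Z, χ (π (t ^ 2)) = κ' * ∑ t, χ (t ^ 2) := by
    rw [← hsumπ fun t => χ (t ^ 2)]
    simp only [map_pow, RingHom.toAddMonoidHom_eq_coe, AddMonoidHom.coe_coe]
  rw [hR, hZ, mul_pow]
  field_simp

end TraceForm

section AdditiveCharacters

theorem exists_mulShift_eq {R : Type*} [CommRing R] [Finite R] {χ : AddChar R ℂ}
    (hχ : χ.IsPrimitive) (θ : AddChar R ℂ) : ∃ a, χ.mulShift a = θ := by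
  have := Fintype.ofFinite R
  have hbij : Function.Bijective χ.mulShift :=
    (Fintype.bijective_iff_injective_and_card _).mpr
      ⟨AddChar.to_mulShift_inj_of_isPrimitive hχ, AddChar.card_eq.symm⟩
  exact hbij.surjective θ

theorem isPrimitive_compAddMonoidHom_trace {Z R S : Type*} [CommRing Z] [CommRing R] [Algebra Z R]
    [CommMonoid S] {χ : AddChar Z S} (hχ : χ.IsPrimitive)
    (htr : (Algebra.traceForm Z R).Nondegenerate) :
    (χ.compAddMonoidHom (Algebra.trace Z R).toAddMonoidHom).IsPrimitive := by
  intro x hx hx1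
  refine hx (htr.1 x fun y => ?_)
  by_contra hxy
  refine hχ hxy (DFunLike.ext _ _ fun s => ?_)
  have h := DFunLike.congr_fun hx1 (s • y)
  rwa [AddChar.mulShift_apply, AddChar.compAddMonoidHom_apply, mul_smul_comm,
    LinearMap.toAddMonoidHom_coe, map_smul, smul_eq_mul, mul_comm s] at h

end AdditiveCharacters

section PrimePowerModulus

theorem natCast_dvd_of_natCast_mul_eq_zero {N a b : ℕ} [NeZero N] (hN : a * b = N) {x : ZMod N}
    (hx : (a : ZMod N) * x = 0) : (b : ZMod N) ∣ x := by
  have ha : 0 < a := Nat.pos_of_ne_zero fun h => NeZero.ne N (by rw [← hN, h, zero_mul])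
  rw [← ZMod.natCast_zmod_val x] at hx ⊢
  rw [← Nat.cast_mul, ZMod.natCast_eq_zero_iff] at hx
  exact Nat.cast_dvd_cast (Nat.dvd_of_mul_dvd_mul_left ha (hN ▸ hx))

theorem exists_eq_smul_of_smul_eq_zero {Z M : Type*} [CommRing Z] [AddCommGroup M] [Module Z M]
    [Module.Free Z M] {r s : Z} (h : ∀ a, s * a = 0 → r ∣ a) {x : M} (hx : s • x = 0) :
    ∃ w, x = r • w := by
  let b := Module.Free.chooseBasis Z M
  have hdvd (i) : r ∣ b.repr x i := h _ <| by
    rw [← smul_eq_mul, ← Finsupp.smul_apply, ← map_smul, hx, map_zero, Finsupp.zero_apply]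
  choose w hw using hdvd
  refine ⟨∑ i ∈ (b.repr x).support, w i • b i, ?_⟩
  conv_lhs => rw [← b.linearCombination_repr x, Finsupp.linearCombination_apply, Finsupp.sum]
  rw [smul_sum]
  exact sum_congr rfl fun i _ => by rw [smul_smul, ← hw]

theorem factorsThrough_of_forall_apply_one_add_mul {S : Type*} [CommMonoidWithZero S] {N d : ℕ}
    [NeZero N] {ψ : DirichletCharacter S N} (hd : d ∣ N)
    (h : ∀ t : ZMod N, ψ (1 + d * t) = 1) : ψ.FactorsThrough d := by
  rw [DirichletCharacter.factorsThrough_iff_ker_unitsMap hd]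
  intro u hu
  have hu1 : ZMod.castHom hd (ZMod d) (u : ZMod N) = 1 := congrArg Units.val hu
  have hdvd : (d : ZMod N) ∣ u - 1 := by
    rw [← ZMod.intCast_zmod_cast (u : ZMod N), map_intCast, ← sub_eq_zero, ← Int.cast_one,
      ← Int.cast_sub, ZMod.intCast_zmod_eq_zero_iff_dvd] at hu1
    rw [← ZMod.intCast_zmod_cast (u : ZMod N)]
    exact_mod_cast Int.cast_dvd_cast (α := ZMod N) _ _ hu1
  obtain ⟨t, ht⟩ := hdvd
  rw [MonoidHom.mem_ker, Units.ext_iff, MulChar.coe_toUnitHom, eq_add_of_sub_eq' ht, h,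
    Units.val_one]

variable {p n : ℕ}

theorem natCast_pow_eq_zero {j : ℕ} (hj : n ≤ j) : (p : ZMod (p ^ n)) ^ j = 0 := by
  rw [← Nat.cast_pow, ZMod.natCast_eq_zero_iff]
  exact pow_dvd_pow p hj

variable [Fact p.Prime]

theorem isUnit_or_natCast_dvd (c : ZMod (p ^ n)) : IsUnit c ∨ (p : ZMod (p ^ n)) ∣ c := by
  rw [← ZMod.natCast_zmod_val c, ZMod.isUnit_iff_coprime, or_iff_not_imp_right]
  intro h
  have hcoprime := (Nat.Prime.coprime_iff_not_dvd (Fact.out : p.Prime)).mpr fun hp =>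
    h (Nat.cast_dvd_cast hp)
  exact hcoprime.symm.pow_right n

theorem exists_apply_one_add_pow_mul_ne_one {S : Type*} [CommMonoidWithZero S]
    {ψ : DirichletCharacter S (p ^ n)} (hψ : ψ.IsPrimitive) (hn : n ≠ 0) :
    ∃ t : ZMod (p ^ n), ψ (1 + (p : ZMod (p ^ n)) ^ (n - 1) * t) ≠ 1 := by
  by_contra! h
  have hfactors : ψ.FactorsThrough (p ^ (n - 1)) :=
    factorsThrough_of_forall_apply_one_add_mul (pow_dvd_pow p (n.sub_le 1)) fun t => by
      rw [Nat.cast_pow, h]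
  have hdvd := ψ.conductor_dvd_of_mem_conductorSet hfactors
  rw [ψ.isPrimitive_def.mp hψ, Nat.pow_dvd_pow_iff_le_right (Fact.out : p.Prime).one_lt] at hdvd
  omega

variable [Invertible (2 : ZMod (p ^ n))] {m : ℕ} {χ : AddChar (ZMod (p ^ n)) ℂ}
  {ψ : DirichletCharacter ℂ (p ^ n)}

theorem exists_apply_quadExp_eq (hmn : m ≤ n) (hnm : n ≤ 3 * m) (hχ : χ.IsPrimitive) :
    ∃ c, ∀ t, ψ (quadExp (ZMod (p ^ n)) ((p : ZMod (p ^ n)) ^ m * t)) =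
      χ (c * ((p : ZMod (p ^ n)) ^ m * t)) := by
  set q : ZMod (p ^ n) := (p : ZMod (p ^ n))
  have hcube (x y : ZMod (p ^ n)) : (q ^ m * x) ^ 2 * (q ^ m * y) = 0 := by
    linear_combination x ^ 2 * y * natCast_pow_eq_zero hnm
  let θ : AddChar (ZMod (p ^ n)) ℂ :=
    { toFun := fun t => ψ (quadExp (ZMod (p ^ n)) (q ^ m * t))
      map_zero_eq_one' := by rw [mul_zero, quadExp_zero, map_one]
      map_add_eq_mul' := fun x y => by
        rw [mul_add, quadExp_add (hcube x y) (mul_comm (q ^ m * x) _ ▸ hcube y x), map_mul] }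
  obtain ⟨a, ha⟩ := exists_mulShift_eq hχ θ
  have hθ (t) : ψ (quadExp (ZMod (p ^ n)) (q ^ m * t)) = χ (a * t) := by
    rw [← AddChar.mulShift_apply, ha]
    rfl
  have hann : ((p ^ (n - m) : ℕ) : ZMod (p ^ n)) * a = 0 := by
    by_contra hne
    refine hχ hne (DFunLike.ext _ _ fun s => ?_)
    have hzero : q ^ m * (q ^ (n - m) * s) = 0 := by
      rw [← mul_assoc, ← pow_add, Nat.add_sub_cancel' hmn, natCast_pow_eq_zero le_rfl, zero_mul]
    rw [AddChar.mulShift_apply, Nat.cast_pow, mul_right_comm, mul_comm, ← hθ, hzero, quadExp_zero,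
      map_one, AddChar.one_apply]
  obtain ⟨c, rfl⟩ := natCast_dvd_of_natCast_mul_eq_zero (pow_sub_mul_pow p hmn) hann
  exact ⟨c, fun t => by rw [hθ, Nat.cast_pow, mul_left_comm, mul_assoc]⟩

theorem isUnit_of_apply_quadExp_eq (hn : 2 ≤ n) (hmn : m < n) (hψ : ψ.IsPrimitive)
    {c : ZMod (p ^ n)} (hc : ∀ t, ψ (quadExp (ZMod (p ^ n)) ((p : ZMod (p ^ n)) ^ m * t)) =
      χ (c * ((p : ZMod (p ^ n)) ^ m * t))) : IsUnit c := by
  refine (isUnit_or_natCast_dvd c).resolve_right ?_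
  rintro ⟨w, rfl⟩
  obtain ⟨s, hs⟩ := exists_apply_one_add_pow_mul_ne_one hψ (by omega)
  set q : ZMod (p ^ n) := (p : ZMod (p ^ n))
  refine hs ?_
  have hsq : (q ^ (n - 1) * s) ^ 2 = 0 := by
    rw [mul_pow, ← pow_mul, natCast_pow_eq_zero (by omega), zero_mul]
  have hsplit : q ^ (n - 1) * s = q ^ m * (q ^ (n - 1 - m) * s) := by
    rw [← mul_assoc, ← pow_add, Nat.add_sub_cancel' (by omega)]
  have hzero : q * w * (q ^ (n - 1) * s) = 0 := by
    rw [mul_mul_mul_comm, ← pow_succ', natCast_pow_eq_zero (by omega), zero_mul]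
  rw [← quadExp_of_sq_eq_zero (Z := ZMod (p ^ n)) hsq, hsplit, hc, ← hsplit, hzero,
    AddChar.map_zero_eq_one]

end PrimePowerModulus

section PrimePowerGaussSum

theorem stdAddChar_natCast_mul {N a b : ℕ} [NeZero N] [NeZero b] (hN : a * b = N) (x : ZMod N) :
    ZMod.stdAddChar ((a : ZMod N) * x) =
      ZMod.stdAddChar (ZMod.castHom (Dvd.intro_left a hN) (ZMod b) x) := by
  have ha : (a : ℂ) ≠ 0 := Nat.cast_ne_zero.mpr fun h => NeZero.ne N (by rw [← hN, h, zero_mul])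
  have hb : (b : ℂ) ≠ 0 := NeZero.ne _
  rw [← ZMod.intCast_zmod_cast x, map_intCast, ← Int.cast_natCast a, ← Int.cast_mul,
    ZMod.stdAddChar_coe, ZMod.stdAddChar_coe, show (N : ℂ) = a * b by exact_mod_cast hN.symm]
  congr 1
  push_cast
  field_simp

variable {p n : ℕ} [Fact p.Prime] {R ι : Type*} [CommRing R] [Algebra (ZMod (p ^ n)) R] [Fintype R]
  [Fintype ι] [DecidableEq ι] {b : Module.Basis ι (ZMod (p ^ n)) R}

theorem exists_sum_stdAddChar_pow_mul_trace_sq (hp : p ≠ 2) {m : ℕ} (hmn : 2 * m ≤ n)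
    (hnm : n ≤ 2 * m + 1) (hb : IsUnit (Algebra.discr (ZMod (p ^ n)) b)) :
    ∃ D : ℂ, D ≠ 0 ∧ ∀ a : ZMod (p ^ n), IsUnit a →
      ∑ z : R, ZMod.stdAddChar (((p : ZMod (p ^ n)) ^ m) ^ 2 *
          (a * Algebra.trace (ZMod (p ^ n)) R (z * z))) =
        D * (∑ t : ZMod (p ^ n),
          ZMod.stdAddChar (((p : ZMod (p ^ n)) ^ m) ^ 2 * (a * (t * t)))) ^ Fintype.card ι := by
  obtain rfl | rfl : n = 2 * m ∨ n = 2 * m + 1 := by omega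
  · refine ⟨1, one_ne_zero, fun a _ => ?_⟩
    rw [← pow_mul', natCast_pow_eq_zero le_rfl]
    simp only [zero_mul, AddChar.map_zero_eq_one, sum_const, card_univ, nsmul_eq_mul, mul_one,
      one_mul]
    rw [Fintype.card_congr b.equivFun.toEquiv, Fintype.card_fun, Nat.cast_pow]
  · let π : ZMod (p ^ (2 * m + 1)) →+* ZMod p :=
      ZMod.castHom (Dvd.intro_left (p ^ (2 * m)) (pow_succ p (2 * m)).symm) (ZMod p)
    obtain ⟨D, hD, hsum⟩ := exists_sum_addChar_trace_sq_eq (S := ℂ) (π := π)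
      (by rwa [ZMod.ringChar_zmod_n]) hb (ZMod.castHom_surjective _)
    refine ⟨D, hD, fun a ha => ?_⟩
    have hπ (x : ZMod (p ^ (2 * m + 1))) :
        ZMod.stdAddChar (((p : ZMod (p ^ (2 * m + 1))) ^ m) ^ 2 * (a * x)) =
          (ZMod.stdAddChar (N := p)).mulShift (π a) (π x) := by
      rw [← pow_mul', ← Nat.cast_pow, stdAddChar_natCast_mul (pow_succ p (2 * m)).symm, map_mul,
        AddChar.mulShift_apply]
    simp only [hπ, ← sq]
    exact hsum _ (ZMod.isPrimitive_stdAddChar p (ha.map π).ne_zero)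

theorem card_mul_algebraGaussSum_eq_of_apply_quadExp_eq [DecidableEq R]
    [Module.Free (ZMod (p ^ n)) R] [Invertible (2 : ZMod (p ^ n))]
    (htr : (Algebra.traceForm (ZMod (p ^ n)) R).Nondegenerate) {m : ℕ} (hm : m ≠ 0)
    (hmn : 2 * m ≤ n) (hnm : n ≤ 3 * m)
    {χ : AddChar (ZMod (p ^ n)) ℂ} (hχ : χ.IsPrimitive) {ψ : DirichletCharacter ℂ (p ^ n)}
    {c : ZMod (p ^ n)} (hc : IsUnit c)
    (hψ : ∀ t, ψ (quadExp (ZMod (p ^ n)) ((p : ZMod (p ^ n)) ^ m * t)) =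
      χ (c * ((p : ZMod (p ^ n)) ^ m * t))) :
    #{z : R | (p : ZMod (p ^ n)) ^ m • z = 0} * algebraGaussSum R ψ χ =
      (ψ (-c) * χ (-c)) ^ Module.finrank (ZMod (p ^ n)) R * ∑ z : R,
        χ (((p : ZMod (p ^ n)) ^ m) ^ 2 *
          (-c * ⅟2 * Algebra.trace (ZMod (p ^ n)) R (z * z))) := by
  have : Nontrivial (ZMod (p ^ n)) :=
    ZMod.nontrivial_iff.mpr (Nat.one_lt_pow (by omega) (Fact.out : p.Prime).one_lt).ne'
  refine card_mul_algebraGaussSum_eq_sum_quadratic (s := (p : ZMod (p ^ n)) ^ (n - m)) ?_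
    (pow_dvd_pow _ (by omega)) ?_ hc hψ (isPrimitive_compAddMonoidHom_trace hχ htr)
    fun x => exists_eq_smul_of_smul_eq_zero (Z := ZMod (p ^ n)) (M := R) fun a ha => ?_
  · rw [← pow_add, natCast_pow_eq_zero (by omega)]
  · rw [← pow_mul]
    exact pow_dvd_pow _ (by omega)
  · rw [← Nat.cast_pow] at ha ⊢
    exact natCast_dvd_of_natCast_mul_eq_zero (pow_sub_mul_pow p (by omega)) ha

theorem exists_algebraGaussSum_eq_of_two_le (hp : Odd p) (hn : 2 ≤ n)
    (hb : IsUnit (Algebra.discr (ZMod (p ^ n)) b)) :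
    ∃ C : ℂ, C ≠ 0 ∧ ∀ ψ : DirichletCharacter ℂ (p ^ n), ψ.IsPrimitive →
      algebraGaussSum R ψ ZMod.stdAddChar = C * gaussSum ψ ZMod.stdAddChar ^ Fintype.card ι := by
  classical
  have htwo : IsUnit ((2 : ℕ) : ZMod (p ^ n)) :=
    (ZMod.isUnit_iff_coprime _ _).mpr (Nat.coprime_two_left.mpr hp.pow)
  let : Invertible (2 : ZMod (p ^ n)) := (Nat.cast_two (R := ZMod (p ^ n)) ▸ htwo).invertible
  have : Module.Free (ZMod (p ^ n)) R := .of_basis b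
  set m := n / 2
  have hprim : (ZMod.stdAddChar (N := p ^ n)).IsPrimitive := ZMod.isPrimitive_stdAddChar _
  have : Fact (1 < p ^ n) := ⟨Nat.one_lt_pow (by omega) (Fact.out : p.Prime).one_lt⟩
  have hfinrank : Module.finrank (ZMod (p ^ n)) R = Fintype.card ι := Module.finrank_eq_card_basis b
  obtain ⟨D, hD, hsum⟩ := exists_sum_stdAddChar_pow_mul_trace_sq (m := m) (R := R) (b := b)
    (hp.ne_two_of_dvd_nat dvd_rfl) (by omega) (by omega) hb
  set κ : ℂ := ((#{z : R | (p : ZMod (p ^ n)) ^ m • z = 0} : ℕ) : ℂ)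
  set κ' : ℂ := ((#{z : ZMod (p ^ n) | (p : ZMod (p ^ n)) ^ m • z = 0} : ℕ) : ℂ)
  have hκ : κ ≠ 0 := Nat.cast_ne_zero.mpr (card_ne_zero.mpr ⟨0, by simp⟩)
  have hκ' : κ' ≠ 0 := Nat.cast_ne_zero.mpr (card_ne_zero.mpr ⟨0, by simp⟩)
  refine ⟨D * κ' ^ Fintype.card ι / κ, by positivity, fun ψ hψ => ?_⟩
  obtain ⟨c, hψc⟩ := exists_apply_quadExp_eq (m := m) (ψ := ψ) (by omega) (by omega) hprim
  have hc := isUnit_of_apply_quadExp_eq hn (by omega) hψ hψc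
  have hR := card_mul_algebraGaussSum_eq_of_apply_quadExp_eq (R := R)
    (traceForm_nondegenerate_of_isUnit_discr hb) (by omega) (by omega) (by omega) hprim hc hψc
  have hZ := card_mul_algebraGaussSum_eq_of_apply_quadExp_eq (R := ZMod (p ^ n))
    traceForm_self_nondegenerate (by omega) (by omega) (by omega) hprim hc hψc
  rw [hsum _ (hc.neg.mul (isUnit_of_invertible _)), hfinrank] at hR
  simp only [Algebra.trace_self_apply, Module.finrank_self, pow_one, algebraGaussSum_self] at hZ
  calc algebraGaussSum R ψ ZMod.stdAddChar
      = κ * algebraGaussSum R ψ ZMod.stdAddChar / κ := by field_simp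
    _ = D * (κ' * gaussSum ψ ZMod.stdAddChar) ^ Fintype.card ι / κ := by
        rw [hR, hZ, mul_pow]
        ring
    _ = D * κ' ^ Fintype.card ι / κ * gaussSum ψ ZMod.stdAddChar ^ Fintype.card ι := by
        rw [mul_pow]
        ring

end PrimePowerGaussSum

theorem isReduced_of_traceForm_nondegenerate {F A : Type*} [CommRing F] [IsReduced F] [CommRing A]
    [Algebra F A] (htr : (Algebra.traceForm F A).Nondegenerate) : IsReduced A :=
  ⟨fun x hx => htr.1 x fun y => (Algebra.isNilpotent_trace_of_isNilpotent
    ((Commute.all x y).isNilpotent_mul_right hx)).eq_zero⟩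

theorem exists_algebraGaussSum_eq_of_prime {q : ℕ} [Fact q.Prime] {R : Type*} [CommRing R]
    [Algebra (ZMod q) R] [Fintype R] (htr : (Algebra.traceForm (ZMod q) R).Nondegenerate) :
    ∃ C : ℂ, C ≠ 0 ∧ ∀ ψ : DirichletCharacter ℂ q,
      algebraGaussSum R ψ ZMod.stdAddChar =
        C * gaussSum ψ ZMod.stdAddChar ^ Module.finrank (ZMod q) R := by
  have := isReduced_of_traceForm_nondegenerate htr
  obtain ⟨k, hk⟩ := exists_algebraGaussSum_eq_of_isReduced (F := ZMod q) (C := ℂ) R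
  refine ⟨(-1) ^ k, by simp, fun ψ => hk ψ _ fun h => ?_⟩
  refine ZMod.isPrimitive_stdAddChar q one_ne_zero (h ▸ AddChar.mulShift_one _)

theorem exists_algebraGaussSum_eq {p n : ℕ} [Fact p.Prime] {R ι : Type*} [CommRing R]
    [Algebra (ZMod (p ^ n)) R] [Fintype R] [Fintype ι] [DecidableEq ι]
    {b : Module.Basis ι (ZMod (p ^ n)) R} (hp : Odd p) (hn : n ≠ 0)
    (hb : IsUnit (Algebra.discr (ZMod (p ^ n)) b)) :
    ∃ C : ℂ, C ≠ 0 ∧ ∀ ψ : DirichletCharacter ℂ (p ^ n), ψ.IsPrimitive →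
      algebraGaussSum R ψ ZMod.stdAddChar = C * gaussSum ψ ZMod.stdAddChar ^ Fintype.card ι := by
  obtain rfl | hn2 : n = 1 ∨ 2 ≤ n := by omega
  · have : Fact (p ^ 1).Prime := ⟨(pow_one p).symm ▸ Fact.out⟩
    obtain ⟨C, hC, h⟩ :=
      exists_algebraGaussSum_eq_of_prime (traceForm_nondegenerate_of_isUnit_discr hb)
    exact ⟨C, hC, fun ψ _ => Module.finrank_eq_card_basis b ▸ h ψ⟩
  · exact exists_algebraGaussSum_eq_of_two_le hp hn2 hb

section BaseChange

variable {A B S T ι : Type*} [CommRing A] [CommRing B] [CommRing S] [CommRing T] [Algebra A S]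
  [Algebra B T] {b : Module.Basis ι A S} {c : Module.Basis ι B T} {σ : A →+* B}
  {π : S →+* T}

theorem repr_map_of_apply_eq [Finite ι] (hπ : ∀ a, π (algebraMap A S a) = algebraMap B T (σ a))
    (hc : ∀ i, c i = π (b i)) (x : S) (i : ι) : c.repr (π x) i = σ (b.repr x i) := by
  have := Fintype.ofFinite ι
  have hx : π x = ∑ j, σ (b.repr x j) • c j := by
    conv_lhs => rw [← b.sum_repr x, map_sum]
    exact sum_congr rfl fun j _ => by rw [Algebra.smul_def, map_mul, hπ, hc, Algebra.smul_def]
  rw [hx, c.repr_sum_self]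

theorem leftMulMatrix_map [Fintype ι] [DecidableEq ι]
    (hπ : ∀ a, π (algebraMap A S a) = algebraMap B T (σ a)) (hc : ∀ i, c i = π (b i)) (x : S) :
    Algebra.leftMulMatrix c (π x) = σ.mapMatrix (Algebra.leftMulMatrix b x) := by
  ext i j
  rw [RingHom.mapMatrix_apply, Matrix.map_apply, Algebra.leftMulMatrix_eq_repr_mul,
    Algebra.leftMulMatrix_eq_repr_mul, hc, ← map_mul, repr_map_of_apply_eq hπ hc]

theorem norm_map [Finite ι] (hπ : ∀ a, π (algebraMap A S a) = algebraMap B T (σ a))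
    (hc : ∀ i, c i = π (b i)) (x : S) : Algebra.norm B (π x) = σ (Algebra.norm A x) := by
  classical
  have := Fintype.ofFinite ι
  rw [Algebra.norm_eq_matrix_det c, Algebra.norm_eq_matrix_det b, leftMulMatrix_map hπ hc,
    RingHom.map_det]

theorem trace_map [Finite ι] (hπ : ∀ a, π (algebraMap A S a) = algebraMap B T (σ a))
    (hc : ∀ i, c i = π (b i)) (x : S) : Algebra.trace B T (π x) = σ (Algebra.trace A S x) := by
  classical
  have := Fintype.ofFinite ι
  rw [Algebra.trace_eq_matrix_trace c, Algebra.trace_eq_matrix_trace b, leftMulMatrix_map hπ hc]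
  exact (AddMonoidHom.map_trace σ _).symm

theorem discr_map [Fintype ι] [DecidableEq ι]
    (hπ : ∀ a, π (algebraMap A S a) = algebraMap B T (σ a)) (hc : ∀ i, c i = π (b i)) :
    Algebra.discr B c = σ (Algebra.discr A b) := by
  rw [Algebra.discr_def, Algebra.discr_def, RingHom.map_det]
  congr 1
  ext i j
  simp only [RingHom.mapMatrix_apply, Matrix.map_apply, Algebra.traceMatrix_apply,
    Algebra.traceForm_apply, hc, ← map_mul, trace_map hπ hc]

end BaseChange

section ReductionModN

variable {N : ℕ} {ι : Type*}

theorem exists_basis_apply_eq [NeZero N] {G M : Type*} [AddCommGroup G] [AddCommGroup M]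
    [Module (ZMod N) M] (b : Module.Basis ι ℤ G) {f : G →+ M} (hf : Function.Surjective f)
    (hker : ∀ x, f x = 0 → ∃ y, N • y = x) :
    ∃ c : Module.Basis ι (ZMod N) M, ∀ i, c i = f (b i) := by
  have htorsion (x : G) : N • f x = 0 := ZModModule.char_nsmul_eq_zero N (f x)
  let g : ModN G N →ₗ[ZMod N] M := ModN.liftEquiv'.symm ⟨f, htorsion⟩
  have hg (x : G) : g (ModN.mkQ N x) = f x := rfl
  have hbij : Function.Bijective g := by
    refine ⟨(injective_iff_map_eq_zero g).mpr fun y hy => ?_, .of_comp (g := ModN.mkQ N) hf⟩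
    obtain ⟨x, rfl⟩ := Submodule.mkQ_surjective _ y
    obtain ⟨y, rfl⟩ := hker x hy
    exact (Submodule.Quotient.mk_eq_zero _).mpr ⟨y, by simp⟩
  exact ⟨(ModN.basis b).map (LinearEquiv.ofBijective g hbij), fun i => by
    rw [Module.Basis.map_apply, ModN.basis_apply_eq_mkQ, LinearEquiv.ofBijective_apply, hg]⟩

variable {O : Type*} [CommRing O] [Algebra (ZMod N) (O ⧸ Ideal.span {(N : O)})]

theorem mk_algebraMap_int (a : ℤ) :
    Ideal.Quotient.mk (Ideal.span {(N : O)}) (algebraMap ℤ O a) =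
      algebraMap (ZMod N) _ (Int.castRingHom (ZMod N) a) := by
  simp only [eq_intCast, map_intCast]

theorem exists_basis_quotient_span_natCast [NeZero N] (b : Module.Basis ι ℤ O) :
    ∃ c : Module.Basis ι (ZMod N) (O ⧸ Ideal.span {(N : O)}), ∀ i,
      c i = Ideal.Quotient.mk (Ideal.span {(N : O)}) (b i) := by
  refine exists_basis_apply_eq b (f := (Ideal.Quotient.mk (Ideal.span {(N : O)})).toAddMonoidHom)
    Ideal.Quotient.mk_surjective fun x hx => ?_
  obtain ⟨y, rfl⟩ := Ideal.mem_span_singleton.mp (Ideal.Quotient.eq_zero_iff_mem.mp hx)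
  exact ⟨y, nsmul_eq_mul _ _⟩

end ReductionModN

section NumberField

open NumberField

theorem e_val_div {M : ℕ} [NeZero M] (a : ZMod M) : e ((a.val : ℂ) / M) = ZMod.stdAddChar a := by
  conv_rhs => rw [← ZMod.natCast_zmod_val a, ← Int.cast_natCast, ZMod.stdAddChar_coe]
  rw [e, Int.cast_natCast, mul_div_assoc]

theorem tau_eq_gaussSum {M : ℕ} [NeZero M] (ψ : DirichletCharacter ℂ M) :
    tau ψ = gaussSum ψ ZMod.stdAddChar := by
  simp only [tau, gaussSum, finsum_eq_sum_of_fintype, e_val_div]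

theorem mk_rep {R : Type*} [CommRing R] {I : Ideal R} (x : R ⧸ I) :
    Ideal.Quotient.mk I (rep x) = x :=
  Function.surjInv_eq _ _

theorem nsmul_quotient_span_natCast_eq_zero {O : Type*} [CommRing O] {N : ℕ}
    (x : O ⧸ Ideal.span {(N : O)}) : N • x = 0 := by
  rw [nsmul_eq_mul, ← map_natCast (Ideal.Quotient.mk _),
    Ideal.Quotient.eq_zero_iff_mem.mpr (Ideal.mem_span_singleton_self _), zero_mul]

theorem isUnit_intCast_zmod_prime_pow {p : ℕ} (hp : p.Prime) {a : ℤ} (ha : ¬ (p : ℤ) ∣ a) (n : ℕ) :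
    IsUnit (a : ZMod (p ^ n)) := by
  rw [ZMod.coe_int_isUnit_iff_isCoprime, Nat.cast_pow]
  exact ((Nat.prime_iff_prime_int.mp hp).coprime_iff_not_dvd.mpr ha).pow_left

variable {K : Type*} [Field K] [NumberField K] {M : ℕ} [NeZero M]
  [Algebra (ZMod M) (𝓞 K ⧸ Ideal.span {(M : 𝓞 K)})]

theorem tauN_eq_algebraGaussSum [Fintype (𝓞 K ⧸ Ideal.span {(M : 𝓞 K)})]
    (ψ : DirichletCharacter ℂ M) :
    tauN K M ψ = ψ (discr K : ZMod M) *
      algebraGaussSum (𝓞 K ⧸ Ideal.span {(M : 𝓞 K)}) ψ ZMod.stdAddChar := by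
  classical
  obtain ⟨c, hc⟩ := exists_basis_quotient_span_natCast (N := M) (RingOfIntegers.basis K)
  have : Module.Free (ZMod M) (𝓞 K ⧸ Ideal.span {(M : 𝓞 K)}) := .of_basis c
  have : Module.Finite (ZMod M) (𝓞 K ⧸ Ideal.span {(M : 𝓞 K)}) := .of_basis c
  rw [← finsum_units_eq_algebraGaussSum, tauN]
  congr 1
  refine finsum_congr fun α => ?_
  rw [e_val_div, ← eq_intCast (Int.castRingHom (ZMod M)), ← norm_map mk_algebraMap_int hc,
    ← eq_intCast (Int.castRingHom (ZMod M)), ← trace_map mk_algebraMap_int hc, mk_rep]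

end NumberField

end CyclotomicGaussSum

open CyclotomicGaussSum NumberField in
theorem stmt9_general (K : Type*) [Field K] [NumberField K] (p : ℕ) [Fact p.Prime] (hodd : Odd p)
    (hpdK : ¬ (p : ℤ) ∣ discr K) (n : ℕ) (hn : 1 ≤ n) :
    ∃ C : ℂ, C ≠ 0 ∧ ∀ ψ : DirichletCharacter ℂ (p ^ n), ψ.IsPrimitive →
      tauN K (p ^ n) ψ =
        C * ψ (discr K : ZMod (p ^ n)) * tau ψ ^ Module.finrank ℚ K := by
  classical
  let : Module (ZMod (p ^ n)) (𝓞 K ⧸ Ideal.span {((p ^ n : ℕ) : 𝓞 K)}) :=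
    AddCommGroup.zmodModule nsmul_quotient_span_natCast_eq_zero
  let := ZMod.algebraOfModule (p ^ n) (𝓞 K ⧸ Ideal.span {((p ^ n : ℕ) : 𝓞 K)})
  obtain ⟨c, hc⟩ := exists_basis_quotient_span_natCast (N := p ^ n) (RingOfIntegers.basis K)
  have hdiscr : IsUnit (Algebra.discr (ZMod (p ^ n)) c) := by
    rw [discr_map mk_algebraMap_int hc, discr_eq_discr]
    exact isUnit_intCast_zmod_prime_pow Fact.out hpdK n
  have := Finite.of_equiv _ c.equivFun.symm.toEquiv
  have := Fintype.ofFinite (𝓞 K ⧸ Ideal.span {((p ^ n : ℕ) : 𝓞 K)})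
  obtain ⟨C, hC, hψ⟩ := exists_algebraGaussSum_eq hodd (Nat.one_le_iff_ne_zero.mp hn) hdiscr
  refine ⟨C, hC, fun ψ hprim => ?_⟩
  rw [tauN_eq_algebraGaussSum, hψ ψ hprim, tau_eq_gaussSum, ← RingOfIntegers.rank K,
    Module.finrank_eq_card_basis (RingOfIntegers.basis K)]
  ring

theorem stmt9 (K : Type*) [Field K] [NumberField K]
    (htotreal : ∀ v : NumberField.InfinitePlace K, v.IsReal)
    [IsGalois ℚ K] (hsolv : IsSolvable (K ≃ₐ[ℚ] K))
    (d : ℕ) (hd : Module.finrank ℚ K = d)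
    (p : ℕ) [Fact p.Prime] (hodd : Odd p)
    (hpdK : ¬ (p : ℤ) ∣ NumberField.discr K)
    (n : ℕ) (hn : 1 ≤ n) :
    ∃ C : ℂ, C ≠ 0 ∧ ∀ ψ : DirichletCharacter ℂ (p ^ n), ψ.IsPrimitive →
      tauN K (p ^ n) ψ = C * ψ ((NumberField.discr K : ZMod (p ^ n))) * tau ψ ^ d := by
  obtain rfl := hd
  exact stmt9_general K p hodd hpdK n hn
end
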